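/- arXiv:1904.01800 — 3 statements merged into one kernel-verified Lean document; each statement's English description precedes it below -/
import Mathlib

section
/- Let Γ be a finite connected simple graph with r+1 vertices, where r+1 ≥ 3, and with n edges, where n ≥ 3, and let F_Γ be its Kirchhoff polynomial. Then for every point a ∈ (ℝ_{>0})^n and every real number s > (r−1)/r, the symmetric n×n matrix (−F_Γ·H_{F_Γ} + s·(∇F_Γ)ᵀ(∇F_Γ)) evaluated at a is positive definite; that is, F_Γ is strictly homogeneous log-concave at every point of the open positive orthant. -/
/-!
Delete the row of a root `ρ` from an oriented incidence matrix of `G` to get `B`. By the matrix-tree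
theorem, `F(x) = det L(x)` for the reduced Laplacian `L(x) = B diag(x) Bᵀ`: this is the Cauchy–Binet
formula, since a maximal minor of `B` is `±1` on a spanning tree and `0` otherwise.

So `F` is the determinant of a linear family of symmetric `r × r` matrices. Where `L(a)` is positive
definite, diagonalizing `L(a)` and `L(v)` simultaneously gives real numbers `lᵢ` with
`F(a + t v) = F(a) ∏ᵢ (1 + lᵢ t)`. The first two derivatives at `t = 0` show that the quadratic form
in question takes the value `F(a)² (∑ lᵢ² - (1 - s) (∑ lᵢ)²)` at `v`. By Cauchy–Schwarz
`(∑ lᵢ)² ≤ r ∑ lᵢ²`, while `(1 - s) r < 1`, so this is positive unless `l = 0`, that is, `L(v) = 0`;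
then `v = 0`, since the off-diagonal entries of the Laplacian of a simple graph are minus the
weights.
-/

open MvPolynomial

/-- A spanning tree of a graph `G`, given as a set `T` of edges of `G` with `|V| - 1` edges
whose spanning subgraph is connected. -/
def IsSpanningTree {V : Type} [Fintype V] [DecidableEq V] (G : SimpleGraph V)
    (T : Finset G.edgeSet) : Prop :=
  T.card = Fintype.card V - 1 ∧
    (SimpleGraph.fromEdgeSet (Subtype.val '' (T : Set G.edgeSet))).Connected

open scoped Classical in
/-- The Kirchhoff polynomial of a graph: the sum over all spanning trees of the product of the
variables corresponding to the edges of the tree. -/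
noncomputable def kirchhoff {V : Type} [Fintype V] [DecidableEq V] (G : SimpleGraph V)
    [Fintype G.edgeSet] : MvPolynomial G.edgeSet ℝ :=
  ∑ T : Finset G.edgeSet, if IsSpanningTree G T then ∏ e ∈ T, X e else 0

section CauchyBinet

open Matrix Finset

variable {m n R : Type*}

theorem sigma_perm_injective {k : ℕ} (e : ∀ S : {S : Finset n // #S = k}, m ≃ S.1) :
    Function.Injective fun (p : Σ _ : {S : Finset n // #S = k}, Equiv.Perm m) (i : m) =>
      (e p.1 (p.2 i) : n) := by
  rintro ⟨S, σ⟩ ⟨T, τ⟩ h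
  have hrange (S : {S : Finset n // #S = k}) (σ : Equiv.Perm m) :
      Set.range (fun i => (e S (σ i) : n)) = S.1 :=
    ((σ.trans (e S)).surjective.range_comp Subtype.val).trans Subtype.range_coe
  obtain rfl : S = T :=
    Subtype.ext <| coe_injective <|
      (hrange S σ).symm.trans <| (congrArg Set.range h).trans (hrange T τ)
  obtain rfl : σ = τ :=
    Equiv.ext fun i => (e S).injective <| Subtype.ext <| congrFun h i
  rfl

variable [Fintype m]

theorem exists_eq_comp_perm_of_injective {f : m → n} (hf : f.Injective)
    (e : ∀ S : {S : Finset n // #S = Fintype.card m}, m ≃ S.1) :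
    ∃ S, ∃ σ : Equiv.Perm m, (fun i => (e S (σ i) : n)) = f := by
  classical
  let S : {S : Finset n // #S = Fintype.card m} := ⟨univ.image f, card_image_of_injective _ hf⟩
  let σ (i : m) : m := (e S).symm ⟨f i, mem_image_of_mem f (mem_univ i)⟩
  have hσ : σ.Injective := fun i j hij => hf <| congrArg Subtype.val ((e S).symm.injective hij)
  exact ⟨S, .ofBijective σ hσ.bijective_of_finite, by ext i; simp [σ]⟩

variable [DecidableEq m] [CommRing R]

theorem det_mul_eq_sum_fun [Fintype n] (A : Matrix m n R) (B : Matrix n m R) :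
    (A * B).det = ∑ f : m → n, (∏ i, A i (f i)) * (B.submatrix f id).det := by
  have hrows : A * B = fun i => ∑ k, A i k • B k := by
    ext i j
    simp [mul_apply, Finset.sum_apply]
  calc (A * B).det
    _ = detRowAlternating.toMultilinearMap fun i => ∑ k, A i k • B k := by rw [hrows]; rfl
    _ = ∑ f : m → n, detRowAlternating.toMultilinearMap fun i => A i (f i) • B (f i) :=
      MultilinearMap.map_sum _ _
    _ = ∑ f : m → n, (∏ i, A i (f i)) * (B.submatrix f id).det :=
      sum_congr rfl fun f _ => MultilinearMap.map_smul_univ _ _ _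

theorem det_submatrix_eq_zero_of_not_injective {f : m → n} (hf : ¬ f.Injective)
    (B : Matrix n m R) : (B.submatrix f id).det = 0 := by
  obtain ⟨i, j, hij, hne⟩ := Function.not_injective_iff.mp hf
  exact det_zero_of_row_eq hne (by ext k; simp [hij])

theorem sum_perm_prod_mul_det_submatrix (g : m → n) (A : Matrix m n R) (B : Matrix n m R) :
    ∑ σ : Equiv.Perm m, (∏ i, A i (g (σ i))) * (B.submatrix (g ∘ σ) id).det
      = (A.submatrix id g).det * (B.submatrix g id).det := by
  have hperm (σ : Equiv.Perm m) :
      (B.submatrix (g ∘ σ) id).det = (σ.sign : ℤ) * (B.submatrix g id).det :=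
    det_permute σ (B.submatrix g id)
  rw [← det_transpose (A.submatrix id g), det_apply', sum_mul]
  refine sum_congr rfl fun σ _ => ?_
  simp only [hperm, transpose_apply, submatrix_apply, id]
  ring

theorem det_mul_eq_sum_det_submatrix [Fintype n] (A : Matrix m n R)
    (B : Matrix n m R) (e : ∀ S : {S : Finset n // #S = Fintype.card m}, m ≃ S.1) :
    (A * B).det = ∑ S, (A.submatrix id fun i => (e S i : n)).det
      * (B.submatrix (fun i => (e S i : n)) id).det := by
  simp_rw [← sum_perm_prod_mul_det_submatrix, det_mul_eq_sum_fun, ← Fintype.sum_sigma']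
  refine (Fintype.sum_of_injective _ (sigma_perm_injective e) _ _ (fun f hf => ?_)
    fun _ => rfl).symm
  rw [det_submatrix_eq_zero_of_not_injective, mul_zero]
  contrapose! hf
  obtain ⟨S, σ, hσ⟩ := exists_eq_comp_perm_of_injective hf e
  exact ⟨⟨S, σ⟩, hσ⟩

theorem det_mul_diagonal_mul_transpose [Fintype n] [DecidableEq n] (B : Matrix m n R) (x : n → R)
    (e : ∀ S : {S : Finset n // #S = Fintype.card m}, m ≃ S.1) :
    (B * diagonal x * Bᵀ).det
      = ∑ S, (B.submatrix id fun i => (e S i : n)).det ^ 2 * ∏ k ∈ S.1, x k := by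
  rw [det_mul_eq_sum_det_submatrix _ _ e]
  refine sum_congr rfl fun S _ => ?_
  have hdiag : (B * diagonal x).submatrix id (fun i => (e S i : n))
      = B.submatrix id (fun i => (e S i : n)) * diagonal fun i => x (e S i) := by
    ext i j
    simp
  have hprod : ∏ i, x (e S i) = ∏ k ∈ S.1, x k :=
    ((e S).prod_comp fun k : S.1 => x k).trans (prod_coe_sort S.1 x)
  rw [hdiag, det_mul, det_diagonal, hprod, ← transpose_submatrix, det_transpose]
  ring

end CauchyBinet

section LineRestriction

open Finset

variable {σ R : Type*} [CommRing R]

theorem pderiv_pderiv_comm (i j : σ) (q : MvPolynomial σ R) :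
    pderiv i (pderiv j q) = pderiv j (pderiv i q) := by
  classical
  have hbracket : ⁅(pderiv i : Derivation R (MvPolynomial σ R) (MvPolynomial σ R)),
      (pderiv j : Derivation R (MvPolynomial σ R) (MvPolynomial σ R))⁆ = 0 :=
    derivation_ext fun k => by
      simp [Derivation.commutator_apply, pderiv_X, Pi.single_apply, apply_ite]
  simpa [Derivation.commutator_apply, sub_eq_zero] using DFunLike.congr_fun hbracket q

/-- The derivative of polynomials in the constant direction `v`. -/
noncomputable def dirDeriv (v : σ → R) : Derivation R (MvPolynomial σ R) (MvPolynomial σ R) :=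
  mkDerivation R fun i => C (v i)

/-- The restriction `t ↦ q (a + t v)` of a polynomial `q` to a line, as a polynomial in `t`. -/
noncomputable def restrictLine (a v : σ → R) : MvPolynomial σ R →ₐ[R] Polynomial R :=
  aeval fun i => Polynomial.C (a i) + Polynomial.C (v i) * Polynomial.X

theorem dirDeriv_eq_sum_pderiv [Fintype σ] (v : σ → R) (q : MvPolynomial σ R) :
    dirDeriv v q = ∑ i, C (v i) * pderiv i q := by
  classical
  have hsum (p : MvPolynomial σ R) :
      (∑ i, (C (v i) : MvPolynomial σ R) • pderiv i) p = ∑ i, C (v i) * pderiv i p := by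
    rw [← Derivation.coeFnAddMonoidHom_apply, map_sum, Finset.sum_apply]
    rfl
  have hD : dirDeriv v = ∑ i, (C (v i) : MvPolynomial σ R) • pderiv i :=
    derivation_ext fun k => by simp [hsum, dirDeriv, Pi.single_apply]
  rw [hD, hsum]

theorem derivative_restrictLine (a v : σ → R) (q : MvPolynomial σ R) :
    (restrictLine a v q).derivative = restrictLine a v (dirDeriv v q) := by
  induction q using MvPolynomial.induction_on with
  | C c => simp [restrictLine, dirDeriv]
  | add p q hp hq => simp [hp, hq]
  | mul_X p i hp =>
    have hX : (restrictLine a v (X i)).derivative = restrictLine a v (dirDeriv v (X i)) := by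
      simp [restrictLine, dirDeriv]
    simp only [map_mul, Polynomial.derivative_mul, hp, hX, Derivation.leibniz, map_add, smul_eq_mul]
    ring

theorem eval_restrictLine (a v : σ → R) (t : R) (q : MvPolynomial σ R) :
    (restrictLine a v q).eval t = eval (a + t • v) q := by
  rw [restrictLine, ← Polynomial.coe_evalRingHom, map_aeval, eval]
  congr 1
  ext i <;> simp [mul_comm t]

theorem eval_zero_restrictLine (a v : σ → R) (q : MvPolynomial σ R) :
    (restrictLine a v q).eval 0 = eval a q := by
  rw [eval_restrictLine, zero_smul, add_zero]

variable {ι : Type*} (s : Finset ι) (l : ι → R)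

theorem eval_zero_prod_one_add :
    (∏ i ∈ s, (1 + Polynomial.C (l i) * Polynomial.X)).eval 0 = 1 := by
  simp [Polynomial.eval_prod]

theorem eval_zero_derivative_prod_one_add :
    (∏ i ∈ s, (1 + Polynomial.C (l i) * Polynomial.X)).derivative.eval 0 = ∑ i ∈ s, l i := by
  classical
  induction s using Finset.induction_on with
  | empty => simp
  | insert i s hi ih =>
    simp [prod_insert hi, sum_insert hi, ih, eval_zero_prod_one_add]

theorem eval_zero_derivative_derivative_prod_one_add :
    (∏ i ∈ s, (1 + Polynomial.C (l i) * Polynomial.X)).derivative.derivative.eval 0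
      = (∑ i ∈ s, l i) ^ 2 - ∑ i ∈ s, l i ^ 2 := by
  classical
  induction s using Finset.induction_on with
  | empty => simp
  | insert i s hi ih =>
    simp only [prod_insert hi, sum_insert hi, ih, eval_zero_derivative_prod_one_add,
      Polynomial.derivative_mul, Polynomial.derivative_add, Polynomial.derivative_one,
      Polynomial.derivative_C, Polynomial.derivative_X, Polynomial.eval_add, Polynomial.eval_mul,
      Polynomial.eval_one, Polynomial.eval_C, Polynomial.eval_X, zero_mul, mul_zero, one_mul,
      mul_one, zero_add, add_zero]
    ring

end LineRestriction

section Pencil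

open Matrix
open scoped MatrixOrder ComplexOrder

variable {m 𝕜 : Type*} [Fintype m] [DecidableEq m] [RCLike 𝕜] {A N : Matrix m m 𝕜}

theorem exists_eq_conjTranspose_mul_diagonal_mul (hA : A.PosDef) (hN : N.IsHermitian) :
    ∃ (P : Matrix m m 𝕜) (l : m → ℝ), A = Pᴴ * P ∧ N = Pᴴ * diagonal (fun i => (l i : 𝕜)) * P := by
  obtain ⟨C, hC⟩ : ∃ C : Matrix m m 𝕜, A = Cᴴ * C :=
    CStarAlgebra.nonneg_iff_eq_star_mul_self.mp hA.posSemidef.nonneg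
  have hCdet : IsUnit C.det := by
    have hdet : IsUnit A.det := hA.isUnit.map detMonoidHom
    rw [hC, det_mul] at hdet
    exact isUnit_of_mul_isUnit_right hdet
  have hM : (C⁻¹ᴴ * N * C⁻¹).IsHermitian := isHermitian_conjTranspose_mul_mul C⁻¹ hN
  obtain ⟨U, l, hU, hspec⟩ : ∃ (U : Matrix m m 𝕜) (l : m → ℝ), U * Uᴴ = 1 ∧
      C⁻¹ᴴ * N * C⁻¹ = U * diagonal (fun i => (l i : 𝕜)) * Uᴴ :=
    ⟨hM.eigenvectorUnitary, hM.eigenvalues, Unitary.coe_mul_star_self _,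
      hM.spectral_theorem.trans (Unitary.conjStarAlgAut_apply ..)⟩
  refine ⟨Uᴴ * C, l, ?_, ?_⟩
  · calc A
      _ = Cᴴ * (U * Uᴴ) * C := by rw [hU, Matrix.mul_one, hC]
      _ = (Uᴴ * C)ᴴ * (Uᴴ * C) := by
        simp only [conjTranspose_mul, conjTranspose_conjTranspose, Matrix.mul_assoc]
  · calc N
      _ = (C⁻¹ * C)ᴴ * N * (C⁻¹ * C) := by simp [nonsing_inv_mul C hCdet]
      _ = Cᴴ * (C⁻¹ᴴ * N * C⁻¹) * C := by simp only [conjTranspose_mul, Matrix.mul_assoc]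
      _ = (Uᴴ * C)ᴴ * diagonal (fun i => (l i : 𝕜)) * (Uᴴ * C) := by
        rw [hspec]
        simp only [conjTranspose_mul, conjTranspose_conjTranspose, Matrix.mul_assoc]

theorem exists_det_add_smul_eq (hA : A.PosDef) (hN : N.IsHermitian) :
    ∃ l : m → ℝ, (∀ t : ℝ, (A + t • N).det = A.det * ((∏ i, (1 + l i * t) : ℝ) : 𝕜))
      ∧ (l = 0 → N = 0) := by
  obtain ⟨P, l, rfl, rfl⟩ := exists_eq_conjTranspose_mul_diagonal_mul hA hN
  refine ⟨l, fun t => ?_, ?_⟩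
  · have hdiag : Pᴴ * P + t • (Pᴴ * diagonal (fun i => (l i : 𝕜)) * P)
        = Pᴴ * diagonal (fun i => ((1 + l i * t : ℝ) : 𝕜)) * P := by
      have hadd : diagonal (fun i => ((1 + l i * t : ℝ) : 𝕜))
          = 1 + t • diagonal fun i => (l i : 𝕜) := by
        rw [← diagonal_one, ← diagonal_smul, diagonal_add]
        congr 1
        ext i
        simp [RCLike.real_smul_eq_coe_mul, mul_comm]
      rw [hadd, Matrix.mul_add, Matrix.add_mul, Matrix.mul_one, Matrix.mul_smul, Matrix.smul_mul]
    rw [hdiag]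
    simp only [det_mul, det_diagonal, RCLike.ofReal_prod]
    ring
  · rintro rfl
    simp

end Pencil

section Determinantal

open Matrix
open scoped ComplexOrder

variable {σ : Type*}

/-- The matrix `-F H_F + s (∇F)ᵀ(∇F)` evaluated at `a`; its positive definiteness is the strict
homogeneous log-concavity of `F` at `a` with parameter `s`. -/
noncomputable def homogLogHessian (F : MvPolynomial σ ℝ) (s : ℝ) (a : σ → ℝ) : Matrix σ σ ℝ :=
  of fun i j => -(eval a F) * eval a (pderiv i (pderiv j F))
    + s * (eval a (pderiv i F) * eval a (pderiv j F))

theorem homogLogHessian_isHermitian (F : MvPolynomial σ ℝ) (s : ℝ) (a : σ → ℝ) :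
    (homogLogHessian F s a).IsHermitian :=
  IsHermitian.ext fun i j => by
    simp only [homogLogHessian, of_apply, star_trivial, pderiv_pderiv_comm i j]
    ring

theorem dotProduct_homogLogHessian_mulVec [Fintype σ] (F : MvPolynomial σ ℝ) (s : ℝ)
    (a v : σ → ℝ) :
    v ⬝ᵥ (homogLogHessian F s a *ᵥ v)
      = -(eval a F) * eval a (dirDeriv v (dirDeriv v F)) + s * eval a (dirDeriv v F) ^ 2 := by
  have hD : eval a (dirDeriv v F) ^ 2
      = ∑ i, ∑ j, v i * eval a (pderiv i F) * (v j * eval a (pderiv j F)) := by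
    simp only [dirDeriv_eq_sum_pderiv, map_sum, map_mul, eval_C, sq, Finset.sum_mul_sum]
  have hDD : eval a (dirDeriv v (dirDeriv v F))
      = ∑ i, ∑ j, v i * (v j * eval a (pderiv i (pderiv j F))) := by
    rw [dirDeriv_eq_sum_pderiv v (dirDeriv v F)]
    simp only [dirDeriv_eq_sum_pderiv, map_sum, map_mul, eval_C, pderiv_C_mul, Finset.mul_sum]
  simp only [hD, hDD, dotProduct, mulVec, homogLogHessian, of_apply, Finset.mul_sum,
    ← Finset.sum_add_distrib]
  exact Finset.sum_congr rfl fun i _ => Finset.sum_congr rfl fun j _ => by ring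

variable {m 𝕜 : Type*} [Fintype m] [DecidableEq m] [RCLike 𝕜]

theorem exists_restrictLine_eq_C_mul_prod {F : MvPolynomial σ ℝ} {A : (σ → ℝ) →ₗ[ℝ] Matrix m m 𝕜}
    (hF : ∀ x, ((eval x F : ℝ) : 𝕜) = (A x).det) (hA : ∀ x, (A x).IsHermitian)
    {a : σ → ℝ} (ha : (A a).PosDef) (v : σ → ℝ) :
    ∃ l : m → ℝ, restrictLine a v F = Polynomial.C (eval a F) *
        ∏ i, (1 + Polynomial.C (l i) * Polynomial.X) ∧ (l = 0 → A v = 0) := by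
  obtain ⟨l, hdet, hl⟩ := exists_det_add_smul_eq ha (hA v)
  refine ⟨l, Polynomial.funext fun t => ?_, hl⟩
  have ht : ((eval (a + t • v) F : ℝ) : 𝕜) = ((eval a F * ∏ i, (1 + l i * t) : ℝ) : 𝕜) := by
    rw [hF, map_add, map_smul, hdet, ← hF, RCLike.ofReal_mul]
  simpa [eval_restrictLine, Polynomial.eval_prod] using RCLike.ofReal_injective ht

theorem one_sub_mul_sq_sum_lt_sum_sq {ι : Type*} [Fintype ι] {l : ι → ℝ} {s : ℝ} (hl : l ≠ 0)
    (hs : (Fintype.card ι : ℝ) - 1 < s * Fintype.card ι) :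
    (1 - s) * (∑ i, l i) ^ 2 < ∑ i, l i ^ 2 := by
  have hpos : 0 < ∑ i, l i ^ 2 := by
    obtain ⟨i, hi⟩ := Function.ne_iff.mp hl
    exact Finset.sum_pos' (fun i _ => sq_nonneg _) ⟨i, Finset.mem_univ i, sq_pos_of_ne_zero hi⟩
  have hcs : (∑ i, l i) ^ 2 ≤ Fintype.card ι * ∑ i, l i ^ 2 := sq_sum_le_card_mul_sum_sq
  rcases le_total (1 - s) 0 with h | h
  · exact (mul_nonpos_of_nonpos_of_nonneg h (sq_nonneg _)).trans_lt hpos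
  · calc (1 - s) * (∑ i, l i) ^ 2
      _ ≤ (1 - s) * (Fintype.card ι * ∑ i, l i ^ 2) := mul_le_mul_of_nonneg_left hcs h
      _ = (Fintype.card ι - s * Fintype.card ι) * ∑ i, l i ^ 2 := by ring
      _ < 1 * ∑ i, l i ^ 2 := mul_lt_mul_of_pos_right (by linarith) hpos
      _ = ∑ i, l i ^ 2 := one_mul _

theorem homogLogHessian_posDef_of_eval_eq_det [Finite σ] {F : MvPolynomial σ ℝ}
    {A : (σ → ℝ) →ₗ[ℝ] Matrix m m 𝕜} (hF : ∀ x, ((eval x F : ℝ) : 𝕜) = (A x).det)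
    (hA : ∀ x, (A x).IsHermitian) (hinj : Function.Injective A) {a : σ → ℝ} (ha : (A a).PosDef)
    {s : ℝ} (hs : (Fintype.card m : ℝ) - 1 < s * Fintype.card m) :
    (homogLogHessian F s a).PosDef := by
  cases nonempty_fintype σ
  refine .of_dotProduct_mulVec_pos (homogLogHessian_isHermitian F s a) fun v hv => ?_
  obtain ⟨l, hline, hl⟩ := exists_restrictLine_eq_C_mul_prod hF hA ha v
  have hl0 : l ≠ 0 := fun h => hv <| hinj <| (hl h).trans (map_zero A).symm
  have hFa : 0 < eval a F := RCLike.ofReal_pos.mp (hF a ▸ ha.det_pos)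
  have hD : eval a (dirDeriv v F) = eval a F * ∑ i, l i := by
    rw [← eval_zero_restrictLine a v, ← derivative_restrictLine, hline, Polynomial.derivative_C_mul,
      Polynomial.eval_C_mul, eval_zero_derivative_prod_one_add]
  have hDD : eval a (dirDeriv v (dirDeriv v F))
      = eval a F * ((∑ i, l i) ^ 2 - ∑ i, l i ^ 2) := by
    rw [← eval_zero_restrictLine a v, ← derivative_restrictLine, ← derivative_restrictLine, hline,
      Polynomial.derivative_C_mul, Polynomial.derivative_C_mul, Polynomial.eval_C_mul,
      eval_zero_derivative_derivative_prod_one_add]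
  calc 0
    _ < eval a F ^ 2 * (∑ i, l i ^ 2 - (1 - s) * (∑ i, l i) ^ 2) :=
      mul_pos (pow_pos hFa 2) (sub_pos.mpr (one_sub_mul_sq_sum_lt_sum_sq hl0 hs))
    _ = star v ⬝ᵥ (homogLogHessian F s a *ᵥ v) := by
      rw [star_trivial, dotProduct_homogLogHessian_mulVec, hD, hDD]
      ring

end Determinantal

section Incidence

open Matrix Finset

variable {V : Type*}

theorem connected_iff_forall_eq_zero (K : Type*) [Zero K] [Nontrivial K] {H : SimpleGraph V}
    (ρ : V) : H.Connected ↔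
      ∀ Y : V → K, Y ρ = 0 → (∀ u v, H.Adj u v → Y u = Y v) → Y = 0 := by
  classical
  refine ⟨fun hH Y hρ hY => funext fun v => ?_, fun h => ?_⟩
  · obtain ⟨p⟩ := hH.preconnected v ρ
    have hconst : Y v = Y ρ := by
      clear hρ
      induction p with
      | nil => rfl
      | cons huv _ ih => exact (hY _ _ huv).trans ih
    exact hconst.trans hρ
  · obtain ⟨c, hc⟩ := exists_ne (0 : K)
    have hreach := h (fun v => if H.Reachable ρ v then 0 else c) (if_pos .rfl) fun u v huv => by
      simp only [show H.Reachable ρ u ↔ H.Reachable ρ v from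
        ⟨fun h => h.trans huv.reachable, fun h => h.trans huv.symm.reachable⟩]
    exact (SimpleGraph.connected_iff_exists_forall_reachable H).mpr
      ⟨ρ, fun v => by_contra fun hv => hc <| by simpa [hv] using congrFun hreach v⟩

theorem forall_subtype_ne_fun_iff {K : Type*} [Zero K] {ρ : V} {P : ({v // v ≠ ρ} → K) → Prop} :
    (∀ x, P x) ↔ ∀ Y : V → K, Y ρ = 0 → P fun v => Y v := by
  refine ⟨fun h Y _ => h _, fun h x => ?_⟩
  have hx := h (Function.extend Subtype.val x 0)
    (Function.extend_apply' _ _ _ fun ⟨v, hv⟩ => v.2 hv)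
  simpa only [Subtype.val_injective.extend_apply] using hx

variable {G : SimpleGraph V}

/-- The first endpoint of an edge, in an arbitrary orientation of the graph. -/
noncomputable def edgeTail (e : G.edgeSet) : V := e.1.out.1

/-- The second endpoint of an edge, in the same orientation as `edgeTail`. -/
noncomputable def edgeHead (e : G.edgeSet) : V := e.1.out.2

theorem mk_edgeTail_edgeHead (e : G.edgeSet) : s(edgeTail e, edgeHead e) = e.1 :=
  e.1.out_eq

theorem edgeTail_ne_edgeHead (e : G.edgeSet) : edgeTail e ≠ edgeHead e :=
  SimpleGraph.Adj.ne <| (mk_edgeTail_edgeHead e ▸ e.2 : s(edgeTail e, edgeHead e) ∈ G.edgeSet)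

/-- The spanning subgraph of `G` with edge set `S`, in the form in which it occurs in
`IsSpanningTree`. -/
abbrev spanningSubgraph (S : Set G.edgeSet) : SimpleGraph V :=
  .fromEdgeSet (Subtype.val '' S)

theorem spanningSubgraph_adj {S : Set G.edgeSet} {u v : V} :
    (spanningSubgraph S).Adj u v ↔ ∃ e ∈ S, e.1 = s(u, v) := by
  rw [SimpleGraph.fromEdgeSet_adj]
  refine and_iff_left_of_imp ?_
  rintro ⟨e, -, he⟩
  exact SimpleGraph.Adj.ne (he ▸ e.2 : s(u, v) ∈ G.edgeSet)

theorem forall_adj_spanningSubgraph_iff {K : Type*} {S : Set G.edgeSet} {Y : V → K} :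
    (∀ u v, (spanningSubgraph S).Adj u v → Y u = Y v)
      ↔ ∀ e ∈ S, Y (edgeTail e) = Y (edgeHead e) := by
  simp only [spanningSubgraph_adj]
  constructor
  · intro h e he
    exact h _ _ ⟨e, he, (mk_edgeTail_edgeHead e).symm⟩
  · rintro h u v ⟨e, he, huv⟩
    rw [← mk_edgeTail_edgeHead, Sym2.eq_iff] at huv
    obtain ⟨rfl, rfl⟩ | ⟨rfl, rfl⟩ := huv
    exacts [h e he, (h e he).symm]

variable [DecidableEq V] {R : Type*}

variable (G R) in
/-- The incidence matrix of `G` with respect to the orientation given by `edgeTail` and `edgeHead`: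
the column of `e` is the indicator of its tail minus the indicator of its head. -/
noncomputable def orientedIncMatrix [Ring R] : Matrix V G.edgeSet R :=
  of fun v e => (Pi.single (edgeTail e) 1 - Pi.single (edgeHead e) 1 : V → R) v

theorem orientedIncMatrix_apply_of_notMem [Ring R] {v : V} {e : G.edgeSet} (hv : v ∉ e.1) :
    orientedIncMatrix G R v e = 0 := by
  rw [← mk_edgeTail_edgeHead, Sym2.mem_iff, not_or] at hv
  simp [orientedIncMatrix, hv.1, hv.2]

variable (G R) in
/-- The oriented incidence matrix of `G` with the row of the root `ρ` deleted. -/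
noncomputable def reducedIncMatrix [Ring R] (ρ : V) : Matrix {v // v ≠ ρ} G.edgeSet R :=
  (orientedIncMatrix G R).submatrix Subtype.val id

theorem reducedIncMatrix_map {R' : Type*} [Ring R] [Ring R'] (f : R →+* R') (ρ : V) :
    (reducedIncMatrix G R ρ).map f = reducedIncMatrix G R' ρ := by
  ext v e
  simp [reducedIncMatrix, orientedIncMatrix, Pi.single_apply, apply_ite f]

variable [Fintype V]

theorem vecMul_orientedIncMatrix [Ring R] (Y : V → R) :
    Y ᵥ* orientedIncMatrix G R = fun e => Y (edgeTail e) - Y (edgeHead e) := by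
  ext e
  simp [vecMul, dotProduct, orientedIncMatrix, mul_sub, sum_sub_distrib, Pi.single_apply]

theorem vecMul_reducedIncMatrix [Ring R] {ρ : V} {Y : V → R} (hρ : Y ρ = 0) :
    (fun v : {v // v ≠ ρ} => Y v) ᵥ* reducedIncMatrix G R ρ
      = fun e => Y (edgeTail e) - Y (edgeHead e) := by
  rw [← vecMul_orientedIncMatrix]
  ext e
  simp [vecMul, dotProduct, reducedIncMatrix, Fintype.sum_eq_add_sum_subtype_ne _ ρ, hρ]

theorem exists_mul_reducedIncMatrix [Ring R] (ρ : V) :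
    ∃ P : Matrix V {v // v ≠ ρ} R, P * reducedIncMatrix G R ρ = orientedIncMatrix G R := by
  let Y (v : V) : V → R := fun u => (Pi.single u 1 - Pi.single ρ 1 : V → R) v
  refine ⟨of fun v w => Y v w, ?_⟩
  ext v e
  have hrow := congrFun (vecMul_reducedIncMatrix (ρ := ρ) (Y := Y v) (by simp [Y])) e
  exact hrow.trans (by simp [Y, orientedIncMatrix])

theorem connected_iff_forall_vecMul_eq_zero (K : Type*) [Ring K] [Nontrivial K] (ρ : V)
    {S : Set G.edgeSet} : (spanningSubgraph S).Connected ↔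
      ∀ x, (∀ e ∈ S, (x ᵥ* reducedIncMatrix G K ρ) e = 0) → x = 0 := by
  rw [connected_iff_forall_eq_zero K ρ, forall_subtype_ne_fun_iff]
  refine forall₂_congr fun Y hρ => ?_
  simp only [vecMul_reducedIncMatrix hρ, forall_adj_spanningSubgraph_iff, sub_eq_zero]
  refine imp_congr_right fun _ => ⟨fun h => funext fun v => congrFun h v, fun h => ?_⟩
  ext v
  by_cases hv : v = ρ
  · rw [hv, hρ, Pi.zero_apply]
  · exact congrFun h ⟨v, hv⟩

theorem vecMul_reducedIncMatrix_injective (K : Type*) [Ring K] [Nontrivial K] (hG : G.Connected)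
    (ρ : V) : Function.Injective (reducedIncMatrix G K ρ).vecMul := by
  have hG' : (spanningSubgraph (Set.univ : Set G.edgeSet)).Connected := by
    simpa [spanningSubgraph] using hG
  intro x y hxy
  refine sub_eq_zero.mp ((connected_iff_forall_vecMul_eq_zero K ρ).mp hG' _ fun e _ => ?_)
  rw [sub_vecMul, sub_eq_zero.mpr hxy, Pi.zero_apply]

/-- The maximal minor of the reduced incidence matrix on the columns in `S`, arranged by `g`. -/
noncomputable def incMinor (R : Type*) [CommRing R] {ρ : V} {S : Finset G.edgeSet}
    (g : {v // v ≠ ρ} ≃ S) : R :=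
  ((reducedIncMatrix G R ρ).submatrix id fun i => (g i : G.edgeSet)).det

variable {ρ : V} {S : Finset G.edgeSet} (g : {v // v ≠ ρ} ≃ S)

theorem incMinor_ne_zero_iff (K : Type*) [CommRing K] [IsDomain K] :
    incMinor K g ≠ 0 ↔ (spanningSubgraph (S : Set G.edgeSet)).Connected := by
  rw [connected_iff_forall_vecMul_eq_zero K ρ, Ne, incMinor, ← exists_vecMul_eq_zero_iff,
    not_exists]
  refine forall_congr' fun x => ?_
  rw [not_and', not_ne_iff]
  refine imp_congr_left ⟨fun h e he => ?_, fun h => funext fun i => h _ (g i).2⟩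
  obtain ⟨i, hi⟩ := g.surjective ⟨e, he⟩
  have hgi : (x ᵥ* reducedIncMatrix G K ρ) (g i : G.edgeSet) = 0 := congrFun h i
  rwa [hi] at hgi

theorem intCast_incMinor [CommRing R] : (incMinor ℤ g : R) = incMinor R g := by
  rw [incMinor, Int.cast_det, ← submatrix_map]
  exact congrArg (fun M : Matrix _ _ R => (M.submatrix id _).det)
    (reducedIncMatrix_map (Int.castRingHom R) ρ)

/-- If `S` is connected, the integral minor is nonzero modulo every prime, hence a unit. -/
theorem incMinor_sq [CommRing R]
    [Decidable (spanningSubgraph (S : Set G.edgeSet)).Connected] :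
    incMinor R g ^ 2 = if (spanningSubgraph (S : Set G.edgeSet)).Connected then 1 else 0 := by
  rw [← intCast_incMinor]
  split_ifs with hS
  · have hunit : IsUnit (incMinor ℤ g) := by
      rw [Int.isUnit_iff_natAbs_eq, Nat.eq_one_iff_not_exists_prime_dvd]
      intro p hp hdvd
      have : Fact p.Prime := ⟨hp⟩
      refine (incMinor_ne_zero_iff g (ZMod p)).mpr hS ?_
      rw [← intCast_incMinor, ZMod.intCast_zmod_eq_zero_iff_dvd]
      exact Int.natCast_dvd.mpr hdvd
    rw [← Int.cast_pow, Int.isUnit_sq hunit, Int.cast_one]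
  · have hzero : incMinor ℤ g = 0 := not_ne_iff.mp <| mt (incMinor_ne_zero_iff g ℤ).mp hS
    rw [hzero, Int.cast_zero, zero_pow two_ne_zero]

end Incidence

section Laplacian

open Matrix Finset
open scoped ComplexOrder

variable {V : Type*} [DecidableEq V] (G : SimpleGraph V) [Fintype G.edgeSet]
  {R : Type*} [CommRing R]

/-- The weighted Laplacian of `G` with the row and column of the root `ρ` deleted, as a linear
function of the edge weights. -/
noncomputable def reducedLaplacian (ρ : V) :
    (G.edgeSet → R) →ₗ[R] Matrix {v // v ≠ ρ} {v // v ≠ ρ} R where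
  toFun x := reducedIncMatrix G R ρ * diagonal x * (reducedIncMatrix G R ρ)ᵀ
  map_add' x y := by
    rw [← Matrix.add_mul, ← Matrix.mul_add, diagonal_add]
    rfl
  map_smul' c x := by rw [diagonal_smul, Matrix.mul_smul, Matrix.smul_mul, RingHom.id_apply]

variable {G}

theorem reducedLaplacian_apply (ρ : V) (x : G.edgeSet → R) :
    reducedLaplacian G ρ x = reducedIncMatrix G R ρ * diagonal x * (reducedIncMatrix G R ρ)ᵀ :=
  rfl

theorem reducedLaplacian_isHermitian (ρ : V) (x : G.edgeSet → ℝ) :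
    (reducedLaplacian G ρ x).IsHermitian := by
  rw [reducedLaplacian_apply, ← conjTranspose_eq_transpose_of_trivial]
  exact isHermitian_mul_mul_conjTranspose _ (isHermitian_diagonal x)

theorem reducedLaplacian_posDef [Finite V] (hG : G.Connected) (ρ : V) {x : G.edgeSet → ℝ}
    (hx : ∀ e, 0 < x e) : (reducedLaplacian G ρ x).PosDef := by
  cases nonempty_fintype V
  rw [reducedLaplacian_apply, ← conjTranspose_eq_transpose_of_trivial]
  exact (PosDef.diagonal hx).mul_mul_conjTranspose_same (vecMul_reducedIncMatrix_injective ℝ hG ρ)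

theorem orientedIncMatrix_mul_diagonal_mul_transpose_apply (x : G.edgeSet → R) (e : G.edgeSet) :
    (orientedIncMatrix G R * diagonal x * (orientedIncMatrix G R)ᵀ) (edgeTail e) (edgeHead e)
      = -x e := by
  have hne := edgeTail_ne_edgeHead e
  rw [mul_apply, Fintype.sum_eq_single e]
  · simp [orientedIncMatrix, hne, hne.symm]
  · intro f hf
    have hmem : edgeTail e ∉ f.1 ∨ edgeHead e ∉ f.1 := by
      rw [← not_and_or, Sym2.mem_and_mem_iff hne, mk_edgeTail_edgeHead]
      exact mt Subtype.ext hf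
    rcases hmem with h | h <;> simp [orientedIncMatrix_apply_of_notMem h]

theorem reducedLaplacian_injective [Finite V] (ρ : V) :
    Function.Injective (reducedLaplacian G ρ : (G.edgeSet → R) →ₗ[R] _) := by
  cases nonempty_fintype V
  obtain ⟨P, hP⟩ := exists_mul_reducedIncMatrix (G := G) (R := R) ρ
  rw [injective_iff_map_eq_zero]
  intro x hx
  have hfull : orientedIncMatrix G R * diagonal x * (orientedIncMatrix G R)ᵀ = 0 := by
    calc orientedIncMatrix G R * diagonal x * (orientedIncMatrix G R)ᵀ
      _ = P * reducedLaplacian G ρ x * Pᵀ := by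
        simp only [← hP, reducedLaplacian_apply, transpose_mul, Matrix.mul_assoc]
      _ = 0 := by rw [hx, Matrix.mul_zero, Matrix.zero_mul]
  ext e
  rw [Pi.zero_apply, ← neg_eq_zero, ← orientedIncMatrix_mul_diagonal_mul_transpose_apply, hfull,
    Matrix.zero_apply]

end Laplacian

section MatrixTree

open Matrix Finset

variable {V : Type} [Fintype V] [DecidableEq V] (G : SimpleGraph V) [Fintype G.edgeSet]

theorem eval_kirchhoff_eq_det_reducedLaplacian (ρ : V) (x : G.edgeSet → ℝ) :
    eval x (kirchhoff G) = (reducedLaplacian G ρ x).det := by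
  classical
  let e (S : {S : Finset G.edgeSet // #S = Fintype.card {v // v ≠ ρ}}) : {v // v ≠ ρ} ≃ S.1 :=
    Fintype.equivOfCardEq (by simp [S.2])
  have hcard : Fintype.card {v // v ≠ ρ} = Fintype.card V - 1 := by simp
  calc eval x (kirchhoff G)
    _ = ∑ S : Finset G.edgeSet with #S = Fintype.card {v // v ≠ ρ},
        if (spanningSubgraph (S : Set G.edgeSet)).Connected then ∏ k ∈ S, x k else 0 := by
      rw [kirchhoff, map_sum, sum_filter, hcard]
      refine sum_congr rfl fun S _ => ?_
      rw [← ite_and, apply_ite (eval x), eval_prod, map_zero]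
      simp only [IsSpanningTree, eval_X]
    _ = ∑ S, incMinor ℝ (e S) ^ 2 * ∏ k ∈ S.1, x k := by
      simp only [incMinor_sq, ite_mul, one_mul, zero_mul]
      exact sum_subtype _ (by simp) _
    _ = (reducedLaplacian G ρ x).det := (det_mul_diagonal_mul_transpose _ x e).symm

/-- The condition on `a` describes the hyperbolicity cone of the Kirchhoff polynomial, which
contains the open positive orthant when `G` is connected. -/
theorem kirchhoff_strictly_homog_logConcave_pos_orthant_general (ρ : V) {a : G.edgeSet → ℝ}
    (ha : (reducedLaplacian G ρ a).PosDef) {r : ℕ} (hV : Fintype.card V = r + 1) {s : ℝ}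
    (hs : (r : ℝ) - 1 < s * r) : (homogLogHessian (kirchhoff G) s a).PosDef := by
  have hcard : Fintype.card {v // v ≠ ρ} = r := by simp [hV]
  exact homogLogHessian_posDef_of_eval_eq_det (eval_kirchhoff_eq_det_reducedLaplacian G ρ)
    (reducedLaplacian_isHermitian ρ) (reducedLaplacian_injective ρ) ha (by rwa [hcard])

end MatrixTree

/-- for a finite connected simple graph `Γ` with `r + 1 ≥ 3` vertices and
`n ≥ 3` edges, the Kirchhoff polynomial is strictly homogeneous log-concave at every point of the
open positive orthant: for every `a` with all coordinates positive and every `s > (r-1)/r`, the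
matrix `-F·H_F + s·(∇F)ᵀ(∇F)` evaluated at `a` is positive definite. -/
theorem kirchhoff_strictly_homog_logConcave_pos_orthant
    {V : Type} [Fintype V] [DecidableEq V] (G : SimpleGraph V) [Fintype G.edgeSet]
    (hconn : G.Connected) (r n : ℕ)
    (hV : Fintype.card V = r + 1) (hr : 3 ≤ r + 1)
    (hE : Fintype.card G.edgeSet = n) (hn : 3 ≤ n)
    (a : G.edgeSet → ℝ) (ha : ∀ e, 0 < a e)
    (s : ℝ) (hs : ((r : ℝ) - 1) / (r : ℝ) < s) :
    (Matrix.of fun i j : G.edgeSet =>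
        -(eval a (kirchhoff G)) * eval a (pderiv i (pderiv j (kirchhoff G)))
          + s * (eval a (pderiv i (kirchhoff G)) * eval a (pderiv j (kirchhoff G)))).PosDef := by
  obtain ⟨ρ⟩ := hconn.nonempty
  have hr0 : (0 : ℝ) < r := by exact_mod_cast (by omega : 0 < r)
  exact kirchhoff_strictly_homog_logConcave_pos_orthant_general G ρ
    (reducedLaplacian_posDef hconn ρ ha) hV ((div_lt_iff₀ hr0).mp hs)
end

section
/- Let r ≥ 2, let K_{r+1} be the complete simple graph on r+1 vertices, let N = binom(r+1, 2) be its number of edges, and let F = F_{K_{r+1}} ∈ ℝ[x_e : e an edge of K_{r+1}] be its Kirchhoff polynomial. Then the following identity of polynomials holds: det(H_F) = (−1)^{N−1}·2^{N−r}·(r−1)·F^{N−r−1}. -/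
/-!
By the matrix-tree theorem, `F = det S` where `S = ∑ x_e L_e` is the Laplacian of the weighted graph
reduced at a vertex `v₀`, and `L_e` is the reduced Laplacian of the single edge `e`. For `K_n` the
`L_e` form a basis of the symmetric matrices of size `n - 1`, so that `F` is the generic symmetric
determinant up to a linear change of variables.

Jacobi's formula, applied twice, gives `H_F = det S • (v vᵀ - Q)` with `v_e = tr (S⁻¹ L_e)` and
`Q_{ef} = tr (S⁻¹ L_e S⁻¹ L_f)`. Since `Q x = v` and `v ⬝ x = tr 1 = n - 1`, the rank-one update
contributes `det (v vᵀ - Q) = (-1) ^ N * (1 - (n - 1)) * det Q`.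

`Q` is the trace form composed with `Y ↦ S⁻¹ Y S⁻¹`, hence `det Q` is the Gram determinant of the
basis `L_e` times the determinant of this congruence action, which is `det S ^ (-n)`: a
multiplicative function of a matrix is determined by its values on diagonal matrices. The Gram
determinant is a power of `2`: the edges at `v₀` have `L_e` equal to a diagonal matrix unit, and the
Schur complement of their identity block is twice the identity, because two edges avoiding `v₀`
share an off-diagonal entry only if they coincide.
-/

open MvPolynomial

open Matrix

/-! ### Derivatives of determinants -/

section Jacobi

variable {A R n : Type*} [CommRing A] [CommRing R] [Algebra A R] [Fintype n]

lemma derivation_prod {ι : Type*} [DecidableEq ι] (d : Derivation A R R) (s : Finset ι)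
    (f : ι → R) : d (∏ i ∈ s, f i) = ∑ i ∈ s, d (f i) * ∏ j ∈ s.erase i, f j := by
  induction s using Finset.induction_on with
  | empty => simp
  | insert a s ha ih =>
    have prod_erase_insert {i : ι} (hi : i ∈ s) :
        ∏ j ∈ (insert a s).erase i, f j = f a * ∏ j ∈ s.erase i, f j := by
      rw [Finset.erase_insert_of_ne (ne_of_mem_of_not_mem hi ha).symm,
        Finset.prod_insert (by simp [ha])]
    rw [Finset.prod_insert ha, Derivation.leibniz, ih, Finset.sum_insert ha,
      Finset.erase_insert ha, smul_eq_mul, smul_eq_mul, Finset.mul_sum, add_comm, mul_comm]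
    congr 1
    refine Finset.sum_congr rfl fun i hi => ?_
    rw [prod_erase_insert hi, mul_left_comm]

lemma derivation_matrix_mul (d : Derivation A R R) (M N : Matrix n n R) :
    (M * N).map d = M.map d * N + M * N.map d := by
  ext i j
  simp only [map_apply, mul_apply, Matrix.add_apply, map_sum, Derivation.leibniz, smul_eq_mul,
    ← Finset.sum_add_distrib]
  exact Finset.sum_congr rfl fun k _ => by ring

variable [DecidableEq n]

lemma trace_adjugate_mul (M N : Matrix n n R) :
    (M.adjugate * N).trace = ∑ j, (M.updateCol j (N.col j)).det := by
  simp_rw [← cramer_apply, cramer_eq_adjugate_mulVec]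
  rfl

lemma derivation_det (d : Derivation A R R) (M : Matrix n n R) :
    d M.det = (M.adjugate * M.map d).trace := by
  have d_sign_mul (σ : Equiv.Perm n) (a : R) :
      d (Equiv.Perm.sign σ * a) = Equiv.Perm.sign σ * d a := by
    simp
  simp_rw [trace_adjugate_mul, det_apply', map_sum, d_sign_mul, derivation_prod, Finset.mul_sum]
  rw [Finset.sum_comm]
  refine Finset.sum_congr rfl fun j _ => Finset.sum_congr rfl fun σ _ => ?_
  rw [← Finset.mul_prod_erase Finset.univ _ (Finset.mem_univ j), updateCol_self]
  congr 2
  exact Finset.prod_congr rfl fun k hk => (updateCol_ne (Finset.ne_of_mem_erase hk)).symm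

lemma det_smul_derivation_adjugate (d : Derivation A R R) (M : Matrix n n R) :
    M.det • M.adjugate.map d
      = d M.det • M.adjugate - M.adjugate * M.map d * M.adjugate := by
  have derivative_of_adjugate_mul :
      M.adjugate.map d * M + M.adjugate * M.map d = d M.det • (1 : Matrix n n R) := by
    rw [← derivation_matrix_mul, adjugate_mul]
    ext i j
    by_cases h : i = j <;> simp [h, one_apply]
  have mul_adjugate_right := congrArg (· * M.adjugate) derivative_of_adjugate_mul
  simp only [add_mul, mul_assoc, mul_adjugate, smul_mul_assoc, one_mul, mul_smul_comm,
    mul_one] at mul_adjugate_right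
  rw [eq_sub_iff_add_eq, ← mul_adjugate_right, mul_assoc]

lemma det_mul_derivation_derivation_det (d₁ d₂ : Derivation A R R) (M : Matrix n n R) :
    M.det * d₁ (d₂ M.det)
      = (M.adjugate * M.map d₁).trace * (M.adjugate * M.map d₂).trace
        - (M.adjugate * M.map d₁ * M.adjugate * M.map d₂).trace
        + M.det * (M.adjugate * (M.map d₂).map d₁).trace := by
  have d_trace (N : Matrix n n R) : d₁ N.trace = (N.map d₁).trace := by
    simp [trace]
  rw [derivation_det d₂, d_trace, derivation_matrix_mul, trace_add, mul_add, ← smul_eq_mul M.det,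
    ← trace_smul, ← smul_mul_assoc, det_smul_derivation_adjugate, derivation_det, sub_mul,
    trace_sub, smul_mul_assoc, trace_smul, smul_eq_mul]

end Jacobi

/-! ### The Hessian of the determinant of a linear pencil -/

/-- The generic element `∑ X_e B_e` of the linear span of a family of matrices; its determinant is
the polynomial whose Hessian is studied. -/
noncomputable def linearPencil {ι n R : Type*} [Fintype ι] [CommRing R] (B : ι → Matrix n n R) :
    Matrix n n (MvPolynomial ι R) :=
  ∑ e, (X e : MvPolynomial ι R) • (B e).map C

/-- The Hessian matrix of a polynomial, with polynomial entries. -/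
noncomputable def hessian {ι R : Type*} [CommRing R] (F : MvPolynomial ι R) :
    Matrix ι ι (MvPolynomial ι R) :=
  Matrix.of fun i j => pderiv i (pderiv j F)

/-- The Gram matrix of a family of matrices for the trace form `(M, N) ↦ tr (M N)`. -/
def traceGram {ι n R : Type*} [Fintype n] [CommRing R] (B : ι → Matrix n n R) : Matrix ι ι R :=
  Matrix.of fun e f => (B e * B f).trace

section Pencil

variable {ι n R : Type*} [Fintype ι] [CommRing R] (B : ι → Matrix n n R)

lemma linearPencil_map_eval (x : ι → R) : (linearPencil B).map (eval x) = ∑ e, x e • B e := by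
  ext i j
  simp [linearPencil, Matrix.sum_apply]

lemma linearPencil_map_pderiv (e : ι) : (linearPencil B).map (pderiv e) = (B e).map C := by
  classical
  ext i j
  simp [linearPencil, Matrix.sum_apply, pderiv_X, Pi.single_apply]

variable [Fintype n] [DecidableEq n]

lemma eval_det_linearPencil (x : ι → R) :
    eval x (linearPencil B).det = (∑ e, x e • B e).det := by
  rw [RingHom.map_det, RingHom.mapMatrix_apply, linearPencil_map_eval]

variable {K : Type*} [Field K] {B : ι → Matrix n n K} {x : ι → K} {S : Matrix n n K}

lemma eval_hessian_det_linearPencil (hS : S = ∑ e, x e • B e) (hdet : S.det ≠ 0) :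
    (hessian (linearPencil B).det).map (eval x)
      = S.det • (vecMulVec (fun e => (S⁻¹ * B e).trace) (fun e => (S⁻¹ * B e).trace)
          - Matrix.of fun e f => (S⁻¹ * B e * S⁻¹ * B f).trace) := by
  have map_eval_pencil : (eval x).mapMatrix (linearPencil B) = S := by
    rw [RingHom.mapMatrix_apply, linearPencil_map_eval, hS]
  have map_eval_C (e : ι) : (eval x).mapMatrix ((B e).map C) = B e := by
    ext i j
    simp
  have map_pderiv_C (e f : ι) : ((B f).map C).map (pderiv (R := K) e) = 0 := by
    ext i j
    simp
  have eval_trace (N : Matrix n n (MvPolynomial ι K)) :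
      eval x N.trace = ((eval x).mapMatrix N).trace := by
    simp [trace]
  have adjugate_eq : S.adjugate = S.det • S⁻¹ := by
    rw [inv_def, smul_smul, Ring.mul_inverse_cancel _ hdet.isUnit, one_smul]
  ext e f
  have second_derivative :=
    congrArg (eval x) (det_mul_derivation_derivation_det (pderiv e) (pderiv f) (linearPencil B))
  rw [linearPencil_map_pderiv, linearPencil_map_pderiv, map_pderiv_C, mul_zero, trace_zero,
    mul_zero, add_zero] at second_derivative
  simp only [map_mul, map_sub, eval_trace, RingHom.map_adjugate, RingHom.map_det, map_eval_pencil,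
    map_eval_C, adjugate_eq, smul_mul_assoc, mul_smul_comm, trace_smul,
    smul_eq_mul] at second_derivative
  apply mul_left_cancel₀ hdet
  simp only [hessian, map_apply, of_apply, Matrix.smul_apply, Matrix.sub_apply, vecMulVec_apply,
    smul_eq_mul]
  rw [second_derivative]
  ring

variable [DecidableEq ι]

lemma det_vecMulVec_mulVec_sub (M : Matrix ι ι R) (x w : ι → R) :
    (vecMulVec (M *ᵥ x) w - M).det = (-1) ^ Fintype.card ι * (1 - w ⬝ᵥ x) * M.det := by
  have factorization : vecMulVec (M *ᵥ x) w - M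
      = -(M * (1 + replicateCol Unit (-x) * replicateRow Unit w)) := by
    rw [← vecMulVec_eq, mul_add, mul_vecMulVec, mul_one, mulVec_neg, neg_vecMulVec, neg_add,
      neg_neg]
    abel
  rw [factorization, det_neg, det_mul, det_one_add_replicateCol_mul_replicateRow, dotProduct_neg]
  ring

lemma det_vecMulVec_trace_sub (hS : S = ∑ e, x e • B e) (hdet : S.det ≠ 0) :
    (vecMulVec (fun e => (S⁻¹ * B e).trace) (fun e => (S⁻¹ * B e).trace)
      - Matrix.of fun e f => (S⁻¹ * B e * S⁻¹ * B f).trace).det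
      = (-1) ^ Fintype.card ι * (1 - Fintype.card n)
        * (Matrix.of fun e f => (S⁻¹ * B e * S⁻¹ * B f).trace).det := by
  have inv_mul_self : S⁻¹ * S = 1 := nonsing_inv_mul _ hdet.isUnit
  have sum_trace (N : Matrix n n K) : ∑ f, (N * B f).trace * x f = (N * S).trace := by
    simp [hS, Matrix.mul_sum, trace_sum, mul_comm]
  have mulVec_x : Matrix.of (fun e f => (S⁻¹ * B e * S⁻¹ * B f).trace) *ᵥ x
      = fun e => (S⁻¹ * B e).trace := by
    ext e
    simp only [mulVec, dotProduct, of_apply, sum_trace]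
    rw [mul_assoc _ S⁻¹, inv_mul_self, mul_one]
  have dotProduct_x : (fun e => (S⁻¹ * B e).trace) ⬝ᵥ x = Fintype.card n := by
    rw [dotProduct, sum_trace, inv_mul_self, trace_one]
  rw [← dotProduct_x, ← det_vecMulVec_mulVec_sub, mulVec_x]

end Pencil

/-! ### The congruence action on symmetric matrices -/

lemma prod_sym2_mul {ι M : Type*} [CommMonoid M] (s : Finset ι) (f : ι → M) :
    ∏ z ∈ s.sym2, (z.map f).mul = (∏ i ∈ s, f i) ^ (s.card + 1) := by
  classical
  induction s using Finset.induction_on with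
  | empty => simp
  | insert a s ha ih =>
    have disjoint_pairs : Disjoint ((insert a s).image fun b => s(a, b)) s.sym2 := by
      simp only [Finset.disjoint_left, Finset.forall_mem_image, Finset.mk_mem_sym2_iff]
      exact fun b _ h => ha h.1
    have injOn_pairs : Set.InjOn (fun b => s(a, b)) (insert a s : Finset ι) :=
      fun b _ c _ h => Sym2.congr_right.1 h
    rw [Finset.sym2_insert, Finset.prod_union disjoint_pairs, Finset.prod_image injOn_pairs, ih]
    simp only [Sym2.map_mk, Sym2.mul_mk, Finset.prod_mul_distrib, Finset.prod_const,
      Finset.card_insert_of_notMem ha, Finset.prod_insert ha]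
    simp only [mul_pow, pow_succ', mul_assoc, mul_comm, mul_left_comm]

/-- A transvection is a commutator of an invertible diagonal matrix and a transvection. -/
lemma map_transvection_eq_one {n K M : Type*} [Fintype n] [DecidableEq n] [Field K] [CommMonoid M]
    (χ : Matrix n n K →* M) {a : K} (ha₀ : a ≠ 0) (ha₁ : a ≠ 1) {i j : n} (hij : i ≠ j) (c : K) :
    χ (transvection i j c) = 1 := by
  set D := diagonal (Function.update 1 i a)
  have a_sub_one_ne_zero : a - 1 ≠ 0 := sub_ne_zero.2 ha₁
  have isUnit_D : IsUnit D := by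
    rw [isUnit_iff_isUnit_det, det_diagonal, Finset.prod_update_of_mem (Finset.mem_univ i)]
    simpa using ha₀
  have isUnit_transvection (b : K) : IsUnit (transvection i j b) := by
    rw [isUnit_iff_isUnit_det, det_transvection_of_ne i j hij]
    exact isUnit_one
  have conj_transvection (b : K) : D * transvection i j b = transvection i j (a * b) * D := by
    simp only [D, transvection, mul_add, add_mul, mul_one, one_mul]
    congr 1
    ext k l
    by_cases h : i = k ∧ j = l
    · simp [h.1.symm, h.2.symm, hij.symm]
    · simp [single_apply_of_ne _ _ _ _ _ h]
  have map_eq_map_mul (b : K) : χ (transvection i j b) = χ (transvection i j (a * b)) := by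
    refine (isUnit_D.map χ).mul_left_cancel ?_
    rw [← map_mul, conj_transvection, map_mul, mul_comm]
  have add_eq : c / (a - 1) + c = a * (c / (a - 1)) := by
    field_simp
    ring
  rw [← ((isUnit_transvection (c / (a - 1))).map χ).mul_eq_left, ← map_mul,
    transvection_mul_transvection_same i j hij, add_eq, ← map_eq_map_mul]

lemma monoidHom_matrix_ext {n K M : Type*} [Fintype n] [DecidableEq n] [Field K] [CommMonoid M]
    {χ ψ : Matrix n n K →* M} {a : K} (ha₀ : a ≠ 0) (ha₁ : a ≠ 1)
    (h : ∀ d, χ (diagonal d) = ψ (diagonal d)) : χ = ψ := by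
  ext A
  induction A using diagonal_transvection_induction with
  | hdiag d _ => exact h d
  | htransvec t =>
    simp only [TransvectionStruct.toMatrix, map_transvection_eq_one _ ha₀ ha₁ t.hij]
  | hmul A B hA hB => rw [map_mul, map_mul, hA, hB]

/-- The symmetric matrices, as a submodule of all matrices. -/
def symmetricMatrices (n R : Type*) [CommRing R] : Submodule R (Matrix n n R) where
  carrier := {A | A.IsSymm}
  add_mem' := IsSymm.add
  zero_mem' := isSymm_zero
  smul_mem' c _ hA := hA.smul c

namespace symmetricMatrices

variable {n R : Type*} [CommRing R]

/-- A symmetric matrix as the function sending the unordered pair `s(i, j)` to its `(i, j)`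
entry. -/
def entries : symmetricMatrices n R ≃ₗ[R] (Sym2 n → R) where
  toFun A := Sym2.lift ⟨A.1, fun i j => (A.2.apply i j).symm⟩
  invFun y := ⟨Matrix.of fun i j => y s(i, j), IsSymm.ext fun i j => congrArg y Sym2.eq_swap⟩
  map_add' A B := by ext ⟨i, j⟩; rfl
  map_smul' c A := by ext ⟨i, j⟩; rfl
  left_inv A := rfl
  right_inv y := by ext ⟨i, j⟩; rfl

lemma finrank_eq [Fintype n] [StrongRankCondition R] :
    Module.finrank R (symmetricMatrices n R) = (Fintype.card n + 1).choose 2 := by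
  classical
  rw [entries.finrank_eq, Module.finrank_fintype_fun_eq_card, Sym2.card]

variable [Fintype n] [DecidableEq n]

/-- The action `Y ↦ A Y Aᵀ` of matrices on symmetric matrices. -/
def congruence : Matrix n n R →* Module.End R (symmetricMatrices n R) where
  toFun A :=
    { toFun := fun Y => ⟨A * Y * Aᵀ, by
        change (A * Y * Aᵀ).IsSymm
        rw [IsSymm, transpose_mul, transpose_mul, transpose_transpose, Y.2.eq, mul_assoc]⟩
      map_add' := fun Y Z => by ext1; simp [mul_add, add_mul]
      map_smul' := fun c Y => by ext1; simp }
  map_one' := by ext1; ext1; simp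
  map_mul' A B := by ext1; ext1; simp [mul_assoc]

lemma det_congruence_diagonal (d : n → R) :
    LinearMap.det (congruence (diagonal d)) = (∏ i, d i) ^ (Fintype.card n + 1) := by
  have entries_conj : entries.toLinearMap ∘ₗ congruence (diagonal d) ∘ₗ entries.symm.toLinearMap
      = toLin' (diagonal fun z : Sym2 n => (z.map d).mul) := by
    refine LinearMap.ext fun y => ?_
    ext ⟨i, j⟩
    change (diagonal d * (entries.symm y).1 * (diagonal d)ᵀ) i j = _
    rw [diagonal_transpose, mul_diagonal, diagonal_mul, toLin'_apply, mulVec_diagonal]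
    exact mul_right_comm _ _ _
  rw [← LinearMap.det_conj _ entries, entries_conj, LinearMap.det_toLin', det_diagonal,
    ← Finset.card_univ, ← prod_sym2_mul, Finset.sym2_univ]

lemma det_congruence {K : Type*} [Field K] [Infinite K] (A : Matrix n n K) :
    LinearMap.det (congruence A) = A.det ^ (Fintype.card n + 1) := by
  classical
  obtain ⟨a, ha⟩ := Infinite.exists_notMem_finset ({0, 1} : Finset K)
  rw [Finset.mem_insert, Finset.mem_singleton, not_or] at ha
  refine DFunLike.congr_fun (monoidHom_matrix_ext ha.1 ha.2 (χ := LinearMap.det.comp congruence)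
    (ψ := (powMonoidHom (Fintype.card n + 1)).comp detMonoidHom) fun d => ?_) A
  refine (det_congruence_diagonal d).trans ?_
  rw [← det_diagonal]
  rfl

end symmetricMatrices

namespace symmetricMatrices

variable {ι n K : Type*} [Fintype ι] [Field K] (B : Module.Basis ι K (symmetricMatrices n K))

lemma sum_repr_smul_coe (Y : symmetricMatrices n K) :
    ∑ e, B.repr Y e • (B e : Matrix n n K) = Y := by
  simpa only [Submodule.coe_sum, Submodule.coe_smul] using congrArg Subtype.val (B.sum_repr Y)

variable [Fintype n]

lemma traceGram_mul_toMatrix [DecidableEq ι] (φ : Module.End K (symmetricMatrices n K)) :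
    traceGram (fun e => (B e).1) * LinearMap.toMatrix B B φ
      = Matrix.of fun e f => ((B e).1 * (φ (B f)).1).trace := by
  ext e f
  rw [of_apply, ← sum_repr_smul_coe B (φ (B f)), Matrix.mul_sum, trace_sum]
  simp [mul_apply, traceGram, LinearMap.toMatrix_apply, mul_comm]

variable [DecidableEq n]

lemma det_linearPencil_ne_zero : (linearPencil fun e => (B e).1).det ≠ 0 := by
  intro h
  have eval_repr_one := eval_det_linearPencil (fun e => (B e).1) (B.repr ⟨1, isSymm_one⟩)
  rw [h, sum_repr_smul_coe, map_zero, det_one] at eval_repr_one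
  exact zero_ne_one eval_repr_one

variable [DecidableEq ι]

lemma det_trace_congruence [Infinite K] {A : Matrix n n K} (hA : A.IsSymm) :
    (Matrix.of fun e f => (A * (B e).1 * A * (B f).1).trace).det
      = (traceGram fun e => (B e).1).det * A.det ^ (Fintype.card n + 1) := by
  rw [← det_congruence, ← LinearMap.det_toMatrix B, ← det_mul, traceGram_mul_toMatrix]
  congr 2
  ext e f
  change _ = ((B e).1 * (A * (B f).1 * Aᵀ)).trace
  rw [hA.eq, mul_assoc A, mul_assoc A, trace_mul_comm A, mul_assoc, mul_assoc, mul_assoc]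

theorem det_pow_mul_det_hessian_det_linearPencil [Infinite K] :
    (linearPencil fun e => (B e).1).det ^ (Fintype.card n + 1)
        * (hessian (linearPencil fun e => (B e).1).det).det
      = C ((-1) ^ Fintype.card ι * (1 - Fintype.card n) * (traceGram fun e => (B e).1).det)
        * (linearPencil fun e => (B e).1).det ^ Fintype.card ι := by
  apply mul_left_cancel₀ (det_linearPencil_ne_zero B)
  refine MvPolynomial.funext fun x => ?_
  set S := ∑ e, x e • (B e).1 with hS
  have eval_det : eval x (linearPencil fun e => (B e).1).det = S.det := eval_det_linearPencil _ x
  by_cases hdet : S.det = 0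
  · rw [map_mul, map_mul (eval x) (linearPencil _).det, eval_det, hdet, zero_mul, zero_mul]
  have isSymm_inv : S⁻¹.IsSymm :=
    IsSymm.inv (sum_mem fun e _ => Submodule.smul_mem (symmetricMatrices n K) (x e) (B e).2)
  simp only [map_mul, map_pow, eval_C, eval_det, RingHom.map_det (eval x), RingHom.mapMatrix_apply,
    eval_hessian_det_linearPencil hS hdet, det_smul, det_vecMulVec_trace_sub hS hdet,
    det_trace_congruence B isSymm_inv, det_nonsing_inv, Ring.inverse_eq_inv', inv_pow]
  field_simp

theorem det_hessian_det_linearPencil [Infinite K] (hn : 2 ≤ Fintype.card n) :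
    (hessian (linearPencil fun e => (B e).1).det).det
      = C ((-1) ^ Fintype.card ι * (1 - Fintype.card n) * (traceGram fun e => (B e).1).det)
        * (linearPencil fun e => (B e).1).det ^ (Fintype.card ι - (Fintype.card n + 1)) := by
  have card_lt_card : Fintype.card n + 1 ≤ Fintype.card ι := by
    rw [← Module.finrank_eq_card_basis B, finrank_eq, Nat.choose_succ_succ', Nat.choose_one_right]
    exact Nat.add_le_add_left (Nat.choose_pos hn) _
  apply mul_left_cancel₀ (pow_ne_zero (Fintype.card n + 1) (det_linearPencil_ne_zero B))
  rw [det_pow_mul_det_hessian_det_linearPencil, mul_left_comm, ← pow_add,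
    Nat.add_sub_cancel' card_lt_card]

end symmetricMatrices

section Gram

variable {ι n K : Type*} [Fintype ι] [DecidableEq ι] [Fintype n] [Field K] {B : ι → Matrix n n K}

lemma linearIndependent_of_det_traceGram_ne_zero (hB : (traceGram B).det ≠ 0) :
    LinearIndependent K B := by
  refine Fintype.linearIndependent_iff.2 fun c hc => congrFun (eq_zero_of_mulVec_eq_zero hB ?_)
  ext e
  have trace_mul_sum : (B e * ∑ f, c f • B f).trace = 0 := by rw [hc, mul_zero, trace_zero]
  simpa [mulVec, dotProduct, traceGram, Matrix.mul_sum, trace_sum, mul_comm] using trace_mul_sum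

theorem det_hessian_det_linearPencil_of_isSymm [DecidableEq n] [Infinite K]
    (hn : 2 ≤ Fintype.card n) (hsymm : ∀ e, (B e).IsSymm)
    (hcard : Fintype.card ι = (Fintype.card n + 1).choose 2) (hgram : (traceGram B).det ≠ 0) :
    (hessian (linearPencil B).det).det
      = C ((-1) ^ Fintype.card ι * (1 - Fintype.card n) * (traceGram B).det)
        * (linearPencil B).det ^ (Fintype.card ι - (Fintype.card n + 1)) := by
  have linearIndependent : LinearIndependent K fun e => (⟨B e, hsymm e⟩ : symmetricMatrices n K) :=
    (linearIndependent_of_det_traceGram_ne_zero hgram).of_comp (symmetricMatrices n K).subtype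
  have span_eq_top := linearIndependent.span_eq_top_of_card_eq_finrank'
    (hcard.trans symmetricMatrices.finrank_eq.symm)
  simpa only [Module.Basis.coe_mk] using
    symmetricMatrices.det_hessian_det_linearPencil
      (Module.Basis.mk linearIndependent span_eq_top.ge) hn

end Gram

/-! ### The matrix-tree theorem -/

section CauchyBinet

variable {ι n R : Type*} [Fintype ι] [Fintype n] [DecidableEq n] [CommRing R]
  (u w : ι → n → R)

lemma det_sum_smul_vecMulVec_eq_sum_injective [DecidableEq ι] (x : ι → R) :
    (∑ e, x e • vecMulVec (u e) (w e)).det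
      = ∑ f : n → ι with f.Injective,
          (∏ i, u (f i) i) * (Matrix.of fun i => w (f i)).det * ∏ i, x (f i) := by
  have rows_eq : ∑ e, x e • vecMulVec (u e) (w e) = fun i => ∑ e, (x e * u e i) • w e := by
    ext i j
    simp [Matrix.sum_apply, vecMulVec_apply, mul_assoc]
  have det_eq_zero {f : n → ι} (hf : ¬ f.Injective) : (Matrix.of fun i => w (f i)).det = 0 := by
    obtain ⟨i, j, hij, hne⟩ := Function.not_injective_iff.1 hf
    exact det_zero_of_row_eq hne (congrArg w hij)
  rw [rows_eq, Finset.sum_filter_of_ne fun f _ hne => by_contra fun hf => hne (by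
    rw [det_eq_zero hf, mul_zero, zero_mul])]
  change detRowAlternating.toMultilinearMap _ = _
  rw [MultilinearMap.map_sum]
  refine Finset.sum_congr rfl fun f _ => ?_
  rw [MultilinearMap.map_smul_univ, Finset.prod_mul_distrib, smul_eq_mul, mul_comm (∏ i, x (f i)),
    mul_right_comm]
  rfl

lemma det_sum_vecMulVec_eq_sum_image_eq [DecidableEq ι] {T : Finset ι}
    (hT : T.card = Fintype.card n) :
    (∑ e ∈ T, vecMulVec (u e) (w e)).det
      = ∑ f : n → ι with f.Injective ∧ Finset.univ.image f = T,
          (∏ i, u (f i) i) * (Matrix.of fun i => w (f i)).det := by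
  have image_eq_iff {f : n → ι} (hf : f.Injective) : Finset.univ.image f = T ↔ ∀ i, f i ∈ T := by
    rw [← Finset.subset_iff_eq_of_card_le, Finset.image_subset_iff]
    · simp only [Finset.mem_univ, true_implies]
    · rw [hT, Finset.card_image_of_injective _ hf, Finset.card_univ]
  have indicator_sum : ∑ e ∈ T, vecMulVec (u e) (w e)
      = ∑ e, (if e ∈ T then (1 : R) else 0) • vecMulVec (u e) (w e) := by
    simp [ite_smul]
  rw [indicator_sum, det_sum_smul_vecMulVec_eq_sum_injective, ← Finset.filter_filter,
    Finset.sum_filter (fun f : n → ι => Finset.univ.image f = T)]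
  refine Finset.sum_congr rfl fun f hf => ?_
  simp only [image_eq_iff (Finset.mem_filter.1 hf).2, Finset.prod_boole, Finset.mem_univ,
    true_implies, mul_ite, mul_one, mul_zero]

lemma det_sum_smul_vecMulVec (x : ι → R) :
    (∑ e, x e • vecMulVec (u e) (w e)).det
      = ∑ T ∈ Finset.powersetCard (Fintype.card n) Finset.univ,
          (∑ e ∈ T, vecMulVec (u e) (w e)).det * ∏ e ∈ T, x e := by
  classical
  have image_mem (f : n → ι) (hf : f ∈ Finset.univ.filter Function.Injective) :
      Finset.univ.image f ∈ Finset.powersetCard (Fintype.card n) Finset.univ := by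
    simp [Finset.card_image_of_injective _ (Finset.mem_filter.1 hf).2]
  rw [det_sum_smul_vecMulVec_eq_sum_injective, ← Finset.sum_fiberwise_of_maps_to image_mem]
  refine Finset.sum_congr rfl fun T hT => ?_
  rw [det_sum_vecMulVec_eq_sum_image_eq u w (Finset.mem_powersetCard.1 hT).2, Finset.sum_mul,
    Finset.filter_filter]
  refine Finset.sum_congr rfl fun f hf => ?_
  obtain ⟨hinj, rfl⟩ := (Finset.mem_filter.1 hf).2
  rw [Finset.prod_image hinj.injOn]

end CauchyBinet

lemma det_sum_vecMulVec_self_eq_one {ι n : Type*} [Fintype ι] [Fintype n] [DecidableEq n]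
    {b : ι → n → ℤ} (hcard : Fintype.card ι = Fintype.card n)
    (hspan : Submodule.span ℤ (Set.range b) = ⊤) :
    (∑ e, vecMulVec (b e) (b e)).det = 1 := by
  let σ := (Fintype.equivOfCardEq hcard).symm
  set M : Matrix n n ℤ := Matrix.of fun i j => b (σ j) i
  have sum_eq : ∑ e, vecMulVec (b e) (b e) = M * Mᵀ := by
    ext i j
    rw [Matrix.sum_apply, mul_apply, ← σ.sum_comp]
    rfl
  have mulVec_surjective : Function.Surjective M.mulVecLin := by
    rw [← LinearMap.range_eq_top, Matrix.range_mulVecLin, ← hspan]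
    exact congrArg _ (σ.surjective.range_comp b)
  rw [sum_eq, det_mul, det_transpose]
  exact Int.isUnit_mul_self (M.isUnit_iff_isUnit_det.1 (mulVec_surjective_iff_isUnit.1
    mulVec_surjective))

section Incidence

variable {V R : Type*} [DecidableEq V] [CommRing R]

variable (R) in
/-- The row of the arc from `a` to `b` in the oriented incidence matrix, with the column of the root
`v₀` deleted. -/
def incidenceVec (v₀ a b : V) (v : {v // v ≠ v₀}) : R :=
  (Pi.single a 1 - Pi.single b 1 : V → R) v

lemma incidenceVec_add (v₀ a b c : V) :
    incidenceVec R v₀ a b + incidenceVec R v₀ b c = incidenceVec R v₀ a c := by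
  ext v
  simp [incidenceVec]

lemma incidenceVec_swap (v₀ a b : V) : incidenceVec R v₀ b a = -incidenceVec R v₀ a b := by
  ext v
  simp [incidenceVec]

lemma incidenceVec_self (v₀ a : V) : incidenceVec R v₀ a a = 0 := by
  ext v
  simp [incidenceVec]

lemma incidenceVec_root (v₀ : V) (v : {v // v ≠ v₀}) :
    incidenceVec R v₀ v v₀ = Pi.single v 1 := by
  ext w
  simp [incidenceVec, Pi.single_apply, w.2, Subtype.ext_iff]

variable (R) in
/-- The Laplacian matrix of a single edge with the row and column of the root `v₀` deleted. -/
def edgeLaplacian (v₀ : V) : Sym2 V → Matrix {v // v ≠ v₀} {v // v ≠ v₀} R :=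
  Sym2.lift ⟨fun a b => vecMulVec (incidenceVec R v₀ a b) (incidenceVec R v₀ a b), fun a b => by
    dsimp only
    rw [incidenceVec_swap v₀ b a, neg_vecMulVec, vecMulVec_neg, neg_neg]⟩

lemma edgeLaplacian_mk (v₀ a b : V) : edgeLaplacian R v₀ s(a, b)
    = vecMulVec (incidenceVec R v₀ a b) (incidenceVec R v₀ a b) :=
  rfl

lemma edgeLaplacian_eq_vecMulVec_out (v₀ : V) (e : Sym2 V) : edgeLaplacian R v₀ e
    = vecMulVec (incidenceVec R v₀ e.out.1 e.out.2) (incidenceVec R v₀ e.out.1 e.out.2) := by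
  rw [← edgeLaplacian_mk]
  exact congrArg _ (Quot.out_eq e).symm

lemma edgeLaplacian_map_intCast (v₀ : V) (e : Sym2 V) :
    (edgeLaplacian ℤ v₀ e).map (Int.cast : ℤ → R) = edgeLaplacian R v₀ e := by
  induction e with
  | h a b =>
    ext i j
    simp [edgeLaplacian_mk, vecMulVec_apply, incidenceVec, Pi.single_apply]

lemma incidenceVec_out_mem_iff {v₀ : V} {p : Submodule R ({v // v ≠ v₀} → R)} (a b : V) :
    incidenceVec R v₀ (Quot.out s(a, b)).1 (Quot.out s(a, b)).2 ∈ p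
      ↔ incidenceVec R v₀ a b ∈ p := by
  have out_eq : s((Quot.out s(a, b)).1, (Quot.out s(a, b)).2) = s(a, b) := Quot.out_eq s(a, b)
  rcases Sym2.eq_iff.1 out_eq with ⟨h₁, h₂⟩ | ⟨h₁, h₂⟩
  · rw [h₁, h₂]
  · rw [h₁, h₂, incidenceVec_swap, neg_mem_iff]

lemma eq_top_of_incidenceVec_mem [Finite V] {G : SimpleGraph V} (hG : G.Connected) {v₀ : V}
    {p : Submodule R ({v // v ≠ v₀} → R)} (hp : ∀ a b, G.Adj a b → incidenceVec R v₀ a b ∈ p) :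
    p = ⊤ := by
  have incidenceVec_root_mem (v : V) : incidenceVec R v₀ v v₀ ∈ p := by
    have reachable := (SimpleGraph.reachable_iff_reflTransGen v v₀).1 (hG.preconnected v v₀)
    induction reachable using Relation.ReflTransGen.head_induction_on with
    | refl => simp [incidenceVec_self]
    | @head a b hab _ ih =>
      rw [← incidenceVec_add v₀ a b v₀]
      exact p.add_mem (hp a b hab) ih
  rw [eq_top_iff, ← (Pi.basisFun R {v // v ≠ v₀}).span_eq, Submodule.span_le]
  rintro _ ⟨v, rfl⟩
  rw [Pi.basisFun_apply, ← incidenceVec_root]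
  exact incidenceVec_root_mem v

variable [Fintype V]

lemma incidenceVec_dotProduct {v₀ : V} {φ : V → R} (hφ : φ v₀ = 0) (a b : V) :
    incidenceVec R v₀ a b ⬝ᵥ (fun v => φ v) = φ a - φ b := by
  have sum_eq : incidenceVec R v₀ a b ⬝ᵥ (fun v => φ v)
      = (Pi.single a 1 - Pi.single b 1 : V → R) ⬝ᵥ φ := by
    have root_term : (Pi.single a 1 - Pi.single b 1 : V → R) v₀ * φ v₀ = 0 := by
      rw [hφ, mul_zero]
    rw [dotProduct, dotProduct, ← Finset.sum_erase Finset.univ (a := v₀) root_term,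
      Finset.sum_subtype _ fun v => Finset.mem_erase.trans (and_iff_left (Finset.mem_univ v))]
    rfl
  rw [sum_eq, sub_dotProduct, single_one_dotProduct, single_one_dotProduct]

lemma det_sum_edgeLaplacian_of_connected (v₀ : V) {T : Finset (Sym2 V)}
    (hcard : T.card = Fintype.card V - 1)
    (hT : (SimpleGraph.fromEdgeSet (T : Set (Sym2 V))).Connected) :
    (∑ e ∈ T, edgeLaplacian ℤ v₀ e).det = 1 := by
  simp_rw [edgeLaplacian_eq_vecMulVec_out, ← Finset.sum_coe_sort T]
  refine det_sum_vecMulVec_self_eq_one (by simp [hcard]) (eq_top_of_incidenceVec_mem hT ?_)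
  intro a b hab
  rw [← incidenceVec_out_mem_iff]
  exact Submodule.subset_span ⟨⟨s(a, b), ((SimpleGraph.fromEdgeSet_adj _).1 hab).1⟩, rfl⟩

lemma det_sum_edgeLaplacian_of_not_connected (v₀ : V) {T : Finset (Sym2 V)}
    (hT : ¬ (SimpleGraph.fromEdgeSet (T : Set (Sym2 V))).Connected) :
    (∑ e ∈ T, edgeLaplacian ℤ v₀ e).det = 0 := by
  classical
  set G := SimpleGraph.fromEdgeSet (T : Set (Sym2 V))
  obtain ⟨v, hv⟩ : ∃ v, ¬ G.Reachable v₀ v := by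
    by_contra! h
    exact hT (SimpleGraph.connected_iff_exists_forall_reachable _ |>.2 ⟨v₀, h⟩)
  set φ : V → ℤ := fun u => if G.Reachable v₀ u then 0 else 1 with hφ
  have φ_root : φ v₀ = 0 := if_pos (SimpleGraph.Reachable.refl v₀)
  have v_ne_root : v ≠ v₀ := by
    rintro rfl
    exact hv (SimpleGraph.Reachable.refl v)
  have φ_eq_of_mem {a b : V} (hab : s(a, b) ∈ T) : φ a = φ b := by
    rcases eq_or_ne a b with rfl | hne
    · rfl
    have adj : G.Adj a b := (SimpleGraph.fromEdgeSet_adj _).2 ⟨hab, hne⟩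
    have reachable_iff : G.Reachable v₀ a ↔ G.Reachable v₀ b :=
      ⟨fun h => h.trans adj.reachable, fun h => h.trans adj.symm.reachable⟩
    simp only [hφ, reachable_iff]
  refine exists_mulVec_eq_zero_iff.1 ⟨fun u => φ u, fun h => ?_, ?_⟩
  · exact one_ne_zero ((if_neg hv).symm.trans (congrFun h ⟨v, v_ne_root⟩))
  · rw [sum_mulVec]
    refine Finset.sum_eq_zero fun e he => ?_
    induction e with
    | h a b =>
      rw [edgeLaplacian_mk, vecMulVec_mulVec, incidenceVec_dotProduct φ_root, φ_eq_of_mem he,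
        sub_self, MulOpposite.op_zero, zero_smul]

lemma det_sum_edgeLaplacian (v₀ : V) {T : Finset (Sym2 V)} (hcard : T.card = Fintype.card V - 1)
    [Decidable (SimpleGraph.fromEdgeSet (T : Set (Sym2 V))).Connected] :
    (∑ e ∈ T, edgeLaplacian R v₀ e).det
      = if (SimpleGraph.fromEdgeSet (T : Set (Sym2 V))).Connected then 1 else 0 := by
  have det_int : (∑ e ∈ T, edgeLaplacian ℤ v₀ e).det
      = if (SimpleGraph.fromEdgeSet (T : Set (Sym2 V))).Connected then 1 else 0 := by
    split_ifs with hT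
    · exact det_sum_edgeLaplacian_of_connected v₀ hcard hT
    · exact det_sum_edgeLaplacian_of_not_connected v₀ hT
  have map_sum_edgeLaplacian : (Int.castRingHom R).mapMatrix (∑ e ∈ T, edgeLaplacian ℤ v₀ e)
      = ∑ e ∈ T, edgeLaplacian R v₀ e := by
    rw [map_sum]
    exact Finset.sum_congr rfl fun e _ => edgeLaplacian_map_intCast v₀ e
  rw [← map_sum_edgeLaplacian, ← RingHom.map_det, det_int]
  split_ifs <;> simp

end Incidence

section MatrixTree

variable {V : Type} [Fintype V] [DecidableEq V] (G : SimpleGraph V) (v₀ : V)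

open scoped Classical in
lemma det_sum_edgeLaplacian_edgeSet {T : Finset G.edgeSet} (hT : T.card = Fintype.card V - 1) :
    (∑ e ∈ T, edgeLaplacian ℝ v₀ e.1).det = if IsSpanningTree G T then 1 else 0 := by
  have connected_iff : (SimpleGraph.fromEdgeSet
      (T.map (Function.Embedding.subtype _) : Set (Sym2 V))).Connected ↔ IsSpanningTree G T := by
    rw [IsSpanningTree, and_iff_right hT, Finset.coe_map]
    rfl
  have sum_map : ∑ e ∈ T, edgeLaplacian ℝ v₀ e.1
      = ∑ e ∈ T.map (Function.Embedding.subtype _), edgeLaplacian ℝ v₀ e := by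
    rw [Finset.sum_map]
    rfl
  rw [sum_map, det_sum_edgeLaplacian v₀ (by rw [Finset.card_map, hT])]
  exact if_congr connected_iff rfl rfl

theorem kirchhoff_eq_det_linearPencil [Fintype G.edgeSet] :
    kirchhoff G = (linearPencil fun e : G.edgeSet => edgeLaplacian ℝ v₀ e).det := by
  classical
  refine MvPolynomial.funext fun x => ?_
  have card_root_compl : Fintype.card {v // v ≠ v₀} = Fintype.card V - 1 := by simp
  have det_pencil : (∑ e, x e • edgeLaplacian ℝ v₀ e.1).det
      = ∑ T ∈ Finset.powersetCard (Fintype.card V - 1) (Finset.univ : Finset G.edgeSet),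
          (∑ e ∈ T, edgeLaplacian ℝ v₀ e.1).det * ∏ e ∈ T, x e := by
    simp_rw [edgeLaplacian_eq_vecMulVec_out, det_sum_smul_vecMulVec, card_root_compl]
  rw [eval_det_linearPencil, kirchhoff, map_sum, det_pencil]
  symm
  refine Finset.sum_subset_zero_on_sdiff (Finset.subset_univ _) (fun T hT => ?_) fun T hT => ?_
  · rw [Finset.mem_sdiff, Finset.mem_powersetCard_univ] at hT
    rw [if_neg fun h => hT.2 h.1, map_zero]
  · rw [det_sum_edgeLaplacian_edgeSet G v₀ (Finset.mem_powersetCard_univ.1 hT)]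
    split_ifs <;> simp

end MatrixTree

/-! ### The complete graph -/

lemma trace_mul_eq_sum_diag_add_sum_offDiag {n R : Type*} [Fintype n]
    [NonUnitalNonAssocSemiring R] (M N : Matrix n n R) :
    (M * N).trace
      = ∑ i, M i i * N i i + ∑ p ∈ Finset.univ.offDiag, M p.1 p.2 * N p.2 p.1 := by
  classical
  simp only [trace, diag_apply, mul_apply, ← Finset.sum_product']
  rw [← Finset.diag_union_offDiag, Finset.sum_union (Finset.disjoint_diag_offDiag _),
    Finset.sum_diag]

/-- The edges of the complete graph at the root `v₀`, indexed by the other vertices. -/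
noncomputable def rootEdgeEquiv {V : Type*} (v₀ : V) :
    {v // v ≠ v₀} ≃ {e : (⊤ : SimpleGraph V).edgeSet // v₀ ∈ e.1} :=
  Equiv.ofBijective (fun v => ⟨⟨s((v : V), v₀), v.2⟩, Sym2.mem_mk_right _ _⟩) <| by
    constructor
    · intro v w h
      exact Subtype.ext (Sym2.congr_left.1 (congrArg (fun e => e.1.1) h))
    · rintro ⟨⟨e, he⟩, hv₀⟩
      obtain ⟨w, rfl⟩ : v₀ ∈ e := hv₀
      have w_ne_root : w ≠ v₀ := ((⊤ : SimpleGraph V).ne_of_adj he).symm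
      exact ⟨⟨w, w_ne_root⟩, Subtype.ext (Subtype.ext Sym2.eq_swap)⟩

lemma rootEdgeEquiv_coe {V : Type*} {v₀ : V} (v : {v // v ≠ v₀}) :
    (rootEdgeEquiv v₀ v).1.1 = s((v : V), v₀) :=
  rfl

section CompleteGraph

variable {V R : Type*} [DecidableEq V] [CommRing R] {v₀ : V}

lemma edgeLaplacian_isSymm (e : Sym2 V) : (edgeLaplacian R v₀ e).IsSymm := by
  induction e with
  | h a b => rw [edgeLaplacian_mk, IsSymm, transpose_vecMulVec]

lemma edgeLaplacian_root (v : {v // v ≠ v₀}) :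
    edgeLaplacian R v₀ s((v : V), v₀) = Matrix.single v v 1 := by
  rw [edgeLaplacian_mk, incidenceVec_root]
  exact (single_eq_single_vecMulVec_single v v).symm

lemma edgeLaplacian_apply_of_ne {e : Sym2 V} (he : ¬ e.IsDiag) {i j : {v // v ≠ v₀}}
    (hij : i ≠ j) : edgeLaplacian R v₀ e i j = if s((i : V), (j : V)) = e then -1 else 0 := by
  induction e with
  | h a b =>
    have coe_ne : (i : V) ≠ j := Subtype.coe_injective.ne hij
    rw [Sym2.mk_isDiag_iff] at he
    simp only [edgeLaplacian_mk, vecMulVec_apply, incidenceVec, Pi.sub_apply, Pi.single_apply,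
      Sym2.eq_iff]
    grind

variable [Fintype V]

lemma card_offDiag_filter_eq_two {e : Sym2 V} (he : ¬ e.IsDiag) (he₀ : v₀ ∉ e) :
    ((Finset.univ : Finset {v // v ≠ v₀}).offDiag.filter
      fun p => s((p.1 : V), (p.2 : V)) = e).card = 2 := by
  induction e with
  | h a b =>
    rw [Sym2.mk_isDiag_iff] at he
    rw [Sym2.mem_iff, not_or] at he₀
    set a' : {v // v ≠ v₀} := ⟨a, Ne.symm he₀.1⟩
    set b' : {v // v ≠ v₀} := ⟨b, Ne.symm he₀.2⟩
    have ne : a' ≠ b' := fun h => he (congrArg Subtype.val h)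
    rw [← Finset.card_pair (a := (a', b')) (b := (b', a')) fun h => ne (congrArg Prod.fst h)]
    congr 1
    ext ⟨i, j⟩
    simp only [Finset.mem_filter, Finset.mem_offDiag, Finset.mem_univ, true_and, Finset.mem_insert,
      Finset.mem_singleton, Prod.mk.injEq, Sym2.eq_iff, Subtype.ext_iff, a', b']
    grind

lemma trace_edgeLaplacian_mul {e f : Sym2 V} (he : ¬ e.IsDiag) (hf : ¬ f.IsDiag) (he₀ : v₀ ∉ e) :
    (edgeLaplacian R v₀ e * edgeLaplacian R v₀ f).trace
      = ∑ i, edgeLaplacian R v₀ e i i * edgeLaplacian R v₀ f i i + if e = f then 2 else 0 := by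
  rw [trace_mul_eq_sum_diag_add_sum_offDiag]
  congr 1
  have off_diagonal_term : ∀ p ∈ (Finset.univ : Finset {v // v ≠ v₀}).offDiag,
      edgeLaplacian R v₀ e p.1 p.2 * edgeLaplacian R v₀ f p.2 p.1
        = if s((p.1 : V), (p.2 : V)) = e then if e = f then 1 else 0 else 0 := by
    intro p hp
    have ne := (Finset.mem_offDiag.1 hp).2.2
    rw [edgeLaplacian_apply_of_ne he ne, edgeLaplacian_apply_of_ne hf ne.symm, Sym2.eq_swap]
    grind
  rw [Finset.sum_congr rfl off_diagonal_term, ← Finset.sum_filter, Finset.sum_const,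
    card_offDiag_filter_eq_two he he₀]
  split_ifs <;> simp

lemma trace_edgeLaplacian_root_mul (v : {v // v ≠ v₀}) (M : Matrix {v // v ≠ v₀} {v // v ≠ v₀} R) :
    (edgeLaplacian R v₀ s((v : V), v₀) * M).trace = M v v := by
  rw [edgeLaplacian_root, trace_single_mul, one_smul]

variable (R) in
lemma det_traceGram_edgeLaplacian (v₀ : V) :
    (traceGram fun e : (⊤ : SimpleGraph V).edgeSet => edgeLaplacian R v₀ e).det
      = 2 ^ Fintype.card {e : (⊤ : SimpleGraph V).edgeSet // v₀ ∉ e.1} := by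
  set M := traceGram fun e : (⊤ : SimpleGraph V).edgeSet => edgeLaplacian R v₀ e with hM
  have root_block : M.toBlock (fun e => v₀ ∈ e.1) (fun e => v₀ ∈ e.1) = 1 := by
    ext e f
    obtain ⟨v, rfl⟩ := (rootEdgeEquiv v₀).surjective e
    obtain ⟨w, rfl⟩ := (rootEdgeEquiv v₀).surjective f
    simp only [hM, toBlock_apply, traceGram, of_apply, rootEdgeEquiv_coe,
      trace_edgeLaplacian_root_mul, one_apply, (rootEdgeEquiv v₀).injective.eq_iff]
    simp [edgeLaplacian_root, single_apply, eq_comm]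
  have schur_complement : M.toBlock (fun e => v₀ ∉ e.1) (fun e => v₀ ∉ e.1)
      - M.toBlock (fun e => v₀ ∉ e.1) (fun e => v₀ ∈ e.1)
        * M.toBlock (fun e => v₀ ∈ e.1) (fun e => v₀ ∉ e.1) = (2 : R) • 1 := by
    ext ⟨e, he₀⟩ ⟨f, hf₀⟩
    rw [Matrix.sub_apply, mul_apply, ← (rootEdgeEquiv v₀).sum_comp, sub_eq_iff_eq_add']
    simp only [hM, toBlock_apply, traceGram, of_apply, rootEdgeEquiv_coe,
      trace_mul_comm (edgeLaplacian R v₀ e) (edgeLaplacian R v₀ s(_, v₀)),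
      trace_edgeLaplacian_root_mul,
      trace_edgeLaplacian_mul (SimpleGraph.not_isDiag_of_mem_edgeSet _ e.2)
        (SimpleGraph.not_isDiag_of_mem_edgeSet _ f.2) he₀]
    simp [one_apply, Subtype.ext_iff]
  rw [det_toBlock M fun e => v₀ ∈ e.1, root_block, det_fromBlocks_one₁₁, schur_complement, det_smul,
    det_one, mul_one]

lemma card_not_root_edge (v₀ : V) :
    Fintype.card {e : (⊤ : SimpleGraph V).edgeSet // v₀ ∉ e.1}
      = Fintype.card (⊤ : SimpleGraph V).edgeSet - Fintype.card {v // v ≠ v₀} := by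
  rw [Fintype.card_subtype_compl, Fintype.card_congr (rootEdgeEquiv v₀)]

lemma card_edgeSet_top (v₀ : V) : Fintype.card (⊤ : SimpleGraph V).edgeSet
      = (Fintype.card {v // v ≠ v₀} + 1).choose 2 := by
  rw [← SimpleGraph.edgeFinset_card, SimpleGraph.card_edgeFinset_top_eq_card_choose_two,
    Fintype.card_subtype_compl, Fintype.card_subtype_eq, Nat.sub_add_cancel]
  exact Fintype.card_pos_iff.2 ⟨v₀⟩

end CompleteGraph

theorem hessian_det_kirchhoff_completeGraph_general {V : Type} [Fintype V] [DecidableEq V]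
    (r N : ℕ) (hr : 2 ≤ r) (hV : Fintype.card V = r + 1) (hN : N = Nat.choose (r + 1) 2) :
    Matrix.det (Matrix.of fun i j : (⊤ : SimpleGraph V).edgeSet =>
        pderiv i (pderiv j (kirchhoff (⊤ : SimpleGraph V))))
      = C ((-1 : ℝ) ^ (N - 1) * 2 ^ (N - r) * ((r : ℝ) - 1))
          * (kirchhoff (⊤ : SimpleGraph V)) ^ (N - r - 1) := by
  obtain ⟨v₀⟩ : Nonempty V := Fintype.card_pos_iff.1 (by omega)
  have card_vertices : Fintype.card {v // v ≠ v₀} = r := by simp [hV]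
  have card_edges : Fintype.card (⊤ : SimpleGraph V).edgeSet = N := by
    rw [card_edgeSet_top v₀, card_vertices, hN]
  have det_gram : (traceGram fun e : (⊤ : SimpleGraph V).edgeSet => edgeLaplacian ℝ v₀ e).det
      = 2 ^ (N - r) := by
    rw [det_traceGram_edgeLaplacian, card_not_root_edge, card_vertices, card_edges]
  have det_hessian := det_hessian_det_linearPencil_of_isSymm (card_vertices ▸ hr)
    (fun e : (⊤ : SimpleGraph V).edgeSet => edgeLaplacian_isSymm e.1) (card_edgeSet_top v₀)
    (det_gram.trans_ne (by positivity))
  rw [← kirchhoff_eq_det_linearPencil, det_gram, card_edges, card_vertices] at det_hessian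
  have N_pos : 0 < N := hN ▸ Nat.choose_pos (by omega)
  have sign_eq : (-1 : ℝ) ^ N * (1 - r) * 2 ^ (N - r) = (-1) ^ (N - 1) * 2 ^ (N - r) * (r - 1) := by
    rw [← Nat.sub_add_cancel N_pos, pow_succ, Nat.add_sub_cancel]
    ring
  rwa [sign_eq, ← Nat.sub_sub] at det_hessian

/-- for the complete graph `K_{r+1}` (`r ≥ 2`) with `N = (r+1 choose 2)` edges
and Kirchhoff polynomial `F`, one has the polynomial identity
`det H_F = (-1)^(N-1) · 2^(N-r) · (r-1) · F^(N-r-1)`. -/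
theorem hessian_det_kirchhoff_completeGraph (r N : ℕ) (hr : 2 ≤ r)
    (hN : N = Nat.choose (r + 1) 2) :
    Matrix.det (Matrix.of fun i j : (⊤ : SimpleGraph (Fin (r + 1))).edgeSet =>
        pderiv i (pderiv j (kirchhoff (⊤ : SimpleGraph (Fin (r + 1))))))
      = C ((-1 : ℝ) ^ (N - 1) * 2 ^ (N - r) * ((r : ℝ) - 1))
          * (kirchhoff (⊤ : SimpleGraph (Fin (r + 1)))) ^ (N - r - 1) :=
  hessian_det_kirchhoff_completeGraph_general r N hr (Fintype.card_fin _) hN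
end

section
/- Let F ∈ ℝ[x_1,…,x_N] be a multi-affine homogeneous polynomial of degree r ≥ 3 all of whose nonzero coefficients are positive, let k be an integer with 0 ≤ k ≤ N−r, and let I ⊆ {k+1,…,N}. Assume that F is strictly homogeneous log-concave at every point of the cone C^N_{I>0} = { z ∈ ℝ^N_{≥0} : z_i > 0 for all i ∈ I }, and assume that each of the polynomials ∂F/∂x_1, ∂(F|_{x_1=0})/∂x_2, …, ∂(F|_{x_1=⋯=x_{k−1}=0})/∂x_k is not identically zero. Then the polynomial F|_{x_1=⋯=x_k=0} ∈ ℝ[x_{k+1},…,x_N] is strictly homogeneous log-concave at every point of C^{N−k}_{I>0} = { z ∈ ℝ^{N−k}_{≥0} : z_i > 0 for all i ∈ I }. -/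
/-!
Extending a point of the smaller cone by zeros gives a point of the larger cone, because `I` avoids
the variables set to zero. Setting variables to zero commutes with differentiating in the remaining
ones, so the matrix of the restricted polynomial is a principal submatrix of the matrix of `F` at
the extended point, and positive definiteness passes to principal submatrices.
-/

open MvPolynomial

section Restriction

variable {σ τ R : Type*} {f : τ → σ}

section CommSemiring

variable [CommSemiring R]

theorem eval_killCompl (hf : Function.Injective f) (F : MvPolynomial σ R) (z : τ → R) :
    eval z (killCompl hf F) = eval (Function.extend f z 0) F := by
  classical
  rw [killCompl, map_aeval]
  congr 2
  · ext; simp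
  · funext i
    by_cases hi : i ∈ Set.range f
    · obtain ⟨j, rfl⟩ := hi
      simp [hf.extend_apply, Equiv.ofInjective_symm_apply]
    · simp [hi, Function.extend_apply' _ _ _ hi]

theorem pderiv_killCompl (hf : Function.Injective f) (i : τ) (F : MvPolynomial σ R) :
    pderiv i (killCompl hf F) = killCompl hf (pderiv (f i) F) := by
  ext m
  simp only [coeff_pderiv, coeff_killCompl, Finsupp.mapDomain_add, Finsupp.mapDomain_single,
    Finsupp.mapDomain_apply hf]

theorem rename_killCompl [DecidablePred (· ∈ Set.range f)] (hf : Function.Injective f)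
    (F : MvPolynomial σ R) :
    rename f (killCompl hf F) = aeval (fun i => if i ∈ Set.range f then X i else 0) F := by
  rw [killCompl, comp_aeval_apply]
  congr 2 with i : 1
  split_ifs with hi
  · rw [rename_X, Equiv.apply_ofInjective_symm hf]
  · exact map_zero _

end CommSemiring

/-- The matrix `-G · H_G + s (∇G)ᵀ(∇G)` at the point `a`; a polynomial `G` that is homogeneous of
degree `r` is strictly homogeneous log-concave at `a` when this matrix is positive definite for all
`s > (r - 1) / r`. -/
noncomputable def logConcavityMatrix [CommRing R] (s : R) (G : MvPolynomial σ R) (a : σ → R) :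
    Matrix σ σ R :=
  Matrix.of fun i j =>
    -(eval a G) * eval a (pderiv i (pderiv j G)) + s * (eval a (pderiv i G) * eval a (pderiv j G))

theorem logConcavityMatrix_killCompl [CommRing R] (hf : Function.Injective f) (s : R)
    (F : MvPolynomial σ R) (z : τ → R) :
    logConcavityMatrix s (killCompl hf F) z =
      (logConcavityMatrix s F (Function.extend f z 0)).submatrix f f := by
  ext i j
  simp only [logConcavityMatrix, Matrix.of_apply, Matrix.submatrix_apply, pderiv_killCompl,
    eval_killCompl]

/-- The cone `C_{I>0}` of nonnegative points whose coordinates indexed by `I` are positive. -/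
def coneWithPosCoords [Zero R] [Preorder R] (I : Set σ) : Set (σ → R) :=
  {z | (∀ i, 0 ≤ z i) ∧ ∀ i ∈ I, 0 < z i}

theorem extend_zero_mem_coneWithPosCoords [Zero R] [Preorder R] (hf : Function.Injective f)
    {I : Set σ} (hI : I ⊆ Set.range f) {z : τ → R} (hz : z ∈ coneWithPosCoords (f ⁻¹' I)) :
    Function.extend f z (0 : σ → R) ∈ coneWithPosCoords I := by
  refine ⟨fun i => ?_, fun i hi => ?_⟩
  · by_cases hi : i ∈ Set.range f
    · obtain ⟨j, rfl⟩ := hi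
      simpa only [hf.extend_apply] using hz.1 j
    · exact (Function.extend_apply' z (0 : σ → R) i hi).ge
  · obtain ⟨j, rfl⟩ := hI hi
    simpa only [hf.extend_apply] using hz.2 j hi

theorem restriction_strictly_homog_logConcave_general [CommRing R] [PartialOrder R] [StarRing R]
    (hf : Function.Injective f) (F : MvPolynomial σ R) {I : Set σ} (hI : I ⊆ Set.range f) (s : R)
    (hconc : ∀ a ∈ coneWithPosCoords I, (logConcavityMatrix s F a).PosDef) :
    ∀ z ∈ coneWithPosCoords (f ⁻¹' I), (logConcavityMatrix s (killCompl hf F) z).PosDef := by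
  intro z hz
  rw [logConcavityMatrix_killCompl]
  exact (hconc _ (extend_zero_mem_coneWithPosCoords hf hI hz)).submatrix hf

end Restriction

/-- let `F` be a multi-affine homogeneous polynomial of degree `r ≥ 3` in `N`
variables with nonnegative coefficients, `0 ≤ k ≤ N - r`, and `I` a set of indices `≥ k`
(variables are indexed by `Fin N`, so `x_1,…,x_k` correspond to indices `0,…,k-1`).  If `F` is
strictly homogeneous log-concave at every point of the cone `C^N_{I>0}` and the iterated partial
derivatives `∂F/∂x_1, ∂(F|_{x_1=0})/∂x_2, …, ∂(F|_{x_1=⋯=x_{k-1}=0})/∂x_k` are all nonzero, then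
`F|_{x_1=⋯=x_k=0}`, as a polynomial in the remaining `N - k` variables, is strictly homogeneous
log-concave at every point of `C^{N-k}_{I>0}`. -/
theorem restriction_strictly_homog_logConcave (N r k : ℕ) (hr : 3 ≤ r)
    (hk : k ≤ N - r)
    (F : MvPolynomial (Fin N) ℝ) (hhom : F.IsHomogeneous r)
    (haff : ∀ i, F.degreeOf i ≤ 1)
    (hcoeff : ∀ m : (Fin N) →₀ ℕ, 0 ≤ F.coeff m)
    (I : Finset (Fin N)) (hI : ∀ i ∈ I, k ≤ (i : ℕ))
    (Fz : ℕ → MvPolynomial (Fin N) ℝ)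
    (hFz : ∀ m : ℕ, Fz m = aeval (fun i : Fin N => if (i : ℕ) < m then 0 else X i) F)
    (hconc : ∀ a : Fin N → ℝ, (∀ i, 0 ≤ a i) → (∀ i ∈ I, 0 < a i) →
      ∀ s : ℝ, ((r : ℝ) - 1) / (r : ℝ) < s →
        (Matrix.of fun i j : Fin N =>
          -(eval a F) * eval a (pderiv i (pderiv j F))
            + s * (eval a (pderiv i F) * eval a (pderiv j F))).PosDef)
    (hne : ∀ (j : ℕ) (hj : j < k) (hjN : j < N), pderiv (⟨j, hjN⟩ : Fin N) (Fz j) ≠ 0) :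
    ∀ z : {i : Fin N // k ≤ (i : ℕ)} → ℝ,
      (∀ i, 0 ≤ z i) → (∀ i : {i : Fin N // k ≤ (i : ℕ)}, i.1 ∈ I → 0 < z i) →
      ∀ s : ℝ, ((r : ℝ) - 1) / (r : ℝ) < s →
        (Matrix.of fun i j : {i : Fin N // k ≤ (i : ℕ)} =>
          -(eval (fun i : Fin N => if h : k ≤ (i : ℕ) then z ⟨i, h⟩ else 0) (Fz k))
              * eval (fun i : Fin N => if h : k ≤ (i : ℕ) then z ⟨i, h⟩ else 0)
                  (pderiv i.1 (pderiv j.1 (Fz k)))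
            + s * (eval (fun i : Fin N => if h : k ≤ (i : ℕ) then z ⟨i, h⟩ else 0)
                    (pderiv i.1 (Fz k))
                * eval (fun i : Fin N => if h : k ≤ (i : ℕ) then z ⟨i, h⟩ else 0)
                    (pderiv j.1 (Fz k)))).PosDef := by
  intro z hz hzI s hs
  have hval := Subtype.val_injective (p := fun i : Fin N => k ≤ (i : ℕ))
  have hpos : (logConcavityMatrix s (killCompl hval F) z).PosDef :=
    restriction_strictly_homog_logConcave_general hval F (I := I)
      (by simpa [Set.subset_def] using hI) s (fun a ha => hconc a ha.1 ha.2 s hs) z ⟨hz, hzI⟩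
  have hrestrict : Fz k = rename Subtype.val (killCompl hval F) := by
    simp only [hFz, rename_killCompl, Subtype.range_coe_subtype, Set.mem_ofPred_eq, ← not_lt,
      ite_not]
  have hextend : (fun i : Fin N => if h : k ≤ (i : ℕ) then z ⟨i, h⟩ else 0) ∘ Subtype.val = z :=
    funext fun i => dif_pos i.2
  simpa only [logConcavityMatrix, hrestrict, pderiv_rename hval, eval_rename, hextend] using hpos
end
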